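/- arXiv:2407.14105 — 11 statements merged into one kernel-verified Lean document; each statement's English description precedes it below -/
import Mathlib

section
/- Let α and β be infinite strings over a finite alphabet Σ and let f : ℕ → ℕ (on positions ≥ 1) be color-preserving, i.e. β(f(x)) = α(x) for all x. Then f is a quasi-isometric reduction from α to β — that is, there exist real constants A ≥ 1 and B ≥ 0 such that for all positions x, y, (1/A)·|x − y| − B ≤ |f(x) − f(y)| ≤ A·|x − y| + B, and for every position y there exists x with |f(x) − y| ≤ A — if and only if there exists an integer C ≥ 1 such that f(1) ≤ C, |f(x) − f(x+1)| ≤ C for all x, and for all x, y, x + C < y implies f(x) < f(y). -/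
/-- An infinite string over an alphabet `Γ` is a function `ℕ → Γ`, with positions
indexed from 1.  `IsQI C α β f` says that `f : ℕ → ℕ` is a `C`-quasi-isometry from
the string `α` to the string `β`: `C ≥ 1`, `f` maps positions (`≥ 1`) to positions,
`f` is color-preserving (`β (f x) = α x`), condition (a) holds (`f 1 ≤ C` and
`|f (x+1) − f x| ≤ C`), and condition (b) holds (`x + C < y → f x < f y`). -/
def IsQI {Γ : Type*} (C : ℕ) (α β : ℕ → Γ) (f : ℕ → ℕ) : Prop :=
  1 ≤ C ∧
  (∀ x, 1 ≤ x → 1 ≤ f x) ∧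
  (∀ x, 1 ≤ x → β (f x) = α x) ∧
  f 1 ≤ C ∧
  (∀ x, 1 ≤ x → |((f (x + 1) : ℤ)) - (f x : ℤ)| ≤ (C : ℤ)) ∧
  (∀ x y, 1 ≤ x → x + C < y → f x < f y)

/-- Quasi-isometric reducibility `α ≤_qi β`: some `C`-quasi-isometry from `α` to `β`
exists. -/
def QIred {Γ : Type*} (α β : ℕ → Γ) : Prop := ∃ C f, IsQI C α β f

/-- Many-one quasi-isometric reducibility `α ≤_mqi β`: some computable
`C`-quasi-isometry from `α` to `β` exists. -/
def MQIred {Γ : Type*} (α β : ℕ → Γ) : Prop :=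
  ∃ C f, IsQI C α β f ∧ Computable f

/-- One-one quasi-isometric reducibility `α ≤_1qi β`: some computable
`C`-quasi-isometry from `α` to `β` exists which is injective on positions. -/
def OQIred {Γ : Type*} (α β : ℕ → Γ) : Prop :=
  ∃ C f, IsQI C α β f ∧ Computable f ∧
    (∀ x y, 1 ≤ x → 1 ≤ y → f x = f y → x = y)

/-- Permutation quasi-isometric reducibility `α ≤_pqi β`: some computable
`C`-quasi-isometry from `α` to `β` exists which is a bijection on positions. -/
def PQIred {Γ : Type*} (α β : ℕ → Γ) : Prop :=
  ∃ C f, IsQI C α β f ∧ Computable f ∧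
    (∀ x y, 1 ≤ x → 1 ≤ y → f x = f y → x = y) ∧
    (∀ y, 1 ≤ y → ∃ x, 1 ≤ x ∧ f x = y)

/-- `α ≡_mqi β`. -/
def MQIequiv {Γ : Type*} (α β : ℕ → Γ) : Prop := MQIred α β ∧ MQIred β α

/-- `α ≡_1qi β`. -/
def OQIequiv {Γ : Type*} (α β : ℕ → Γ) : Prop := OQIred α β ∧ OQIred β α

/-- `α ≡_pqi β`. -/
def PQIequiv {Γ : Type*} (α β : ℕ → Γ) : Prop := PQIred α β ∧ PQIred β α

/-!
If `f` embeds the positions quasi-isometrically, then `f` tends to infinity. Were `f y ≤ f x` for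
some `y` far beyond `x`, the sequence would have to climb past the level `f x` again after `y`; as
its jumps are bounded, it would then take a value close to `f x` far away from `x`, contradicting
the lower bound.

Conversely, bounded jumps make `f` Lipschitz, and a function that increases strictly over every
distance larger than `C` gains at least `k` over the distance `(C + 1) * k`, which is the linear
lower bound. Bounded jumps also prevent an unbounded sequence from skipping a long interval, so
the image is coarsely dense.
-/

open Filter Bornology

theorem exists_le_and_lt_succ {α : Type*} [LinearOrder α] {u : ℕ → α} {c : α} {m n : ℕ}
    (hmn : m ≤ n) (hm : u m ≤ c) (hn : c < u n) : ∃ k, m ≤ k ∧ u k ≤ c ∧ c < u (k + 1) := by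
  by_contra! h
  exact (Nat.le_induction (P := fun k _ => u k ≤ c) hm h n hmn).not_gt hn

theorem exists_le_and_lt_succ_of_tendsto_atTop {α : Type*} [LinearOrder α] [NoMaxOrder α]
    {u : ℕ → α} (hu : Tendsto u atTop atTop) {c : α} {m : ℕ} (hm : u m ≤ c) :
    ∃ k, m ≤ k ∧ u k ≤ c ∧ c < u (k + 1) :=
  let ⟨_, hmn, hn⟩ := ((eventually_ge_atTop m).and (hu.eventually_gt_atTop c)).exists
  exists_le_and_lt_succ hmn hm hn

theorem one_div_mul_sub_le_iff {K : Type*} [Field K] [LinearOrder K] [IsStrictOrderedRing K]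
    {a b d e : K} (ha : 0 < a) : 1 / a * d - b ≤ e ↔ d ≤ a * (e + b) := by
  rw [sub_le_iff_le_add, one_div_mul_eq_div, div_le_iff₀' ha]

theorem dist_eq_natCast_sub_of_le {x y : ℕ} (hxy : x ≤ y) : dist x y = (y : ℝ) - x := by
  rw [dist_comm, Nat.dist_eq, abs_of_nonneg (sub_nonneg.2 (Nat.cast_le.2 hxy))]

theorem natCast_tsub_le_dist (x y : ℕ) : ((y - x : ℕ) : ℝ) ≤ dist x y := by
  rcases le_total x y with hxy | hyx
  · rw [Nat.cast_sub hxy, dist_eq_natCast_sub_of_le hxy]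
  · simp [Nat.sub_eq_zero_of_le hyx]

theorem dist_le_mul_dist_of_dist_succ_le {Y : Type*} [PseudoMetricSpace Y] {u : ℕ → Y} {a : ℕ}
    {K : ℝ} (hu : ∀ x, a ≤ x → dist (u x) (u (x + 1)) ≤ K) {x y : ℕ} (hx : a ≤ x) (hy : a ≤ y) :
    dist (u x) (u y) ≤ K * dist x y := by
  wlog hxy : x ≤ y generalizing x y
  · simpa only [dist_comm] using this hy hx (le_of_not_ge hxy)
  calc dist (u x) (u y) ≤ ∑ _i ∈ Finset.Ico x y, K :=
        dist_le_Ico_sum_of_dist_le hxy fun hk _ => hu _ (hx.trans hk)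
    _ = K * dist x y := by
        rw [Finset.sum_const, Nat.card_Ico, nsmul_eq_mul, Nat.cast_sub hxy, mul_comm,
          dist_eq_natCast_sub_of_le hxy]

theorem exists_dist_le_of_dist_succ_le {u : ℕ → ℝ} {a : ℕ} {K c : ℝ}
    (hu : ∀ x, a ≤ x → dist (u x) (u (x + 1)) ≤ K) (hlim : Tendsto u atTop atTop) (hc : u a ≤ c) :
    ∃ x, a ≤ x ∧ dist (u x) c ≤ K := by
  obtain ⟨k, hak, hle, hlt⟩ := exists_le_and_lt_succ_of_tendsto_atTop hlim hc
  exact ⟨k, hak, (Real.dist_left_le_of_mem_uIcc (Set.mem_uIcc_of_le hle hlt.le)).trans (hu k hak)⟩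

section QuasiIsometricOn

variable {X Y : Type*} [PseudoMetricSpace X] [PseudoMetricSpace Y] {A B : ℝ}

/-- `f` is an `(A, B)`-quasi-isometric embedding of `s`: on `s` it distorts distances by at most
the factor `A`, up to the additive error `B`. No density of the image is required. -/
def IsQuasiIsometricOn (A B : ℝ) (f : X → Y) (s : Set X) : Prop :=
  ∀ x y, x ∈ s → y ∈ s →
    1 / A * dist x y - B ≤ dist (f x) (f y) ∧ dist (f x) (f y) ≤ A * dist x y + B

namespace IsQuasiIsometricOn

theorem dist_le_mul_dist_add {f : X → Y} {s : Set X} (h : IsQuasiIsometricOn A B f s)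
    (hA : 0 < A) {x y : X} (hx : x ∈ s) (hy : y ∈ s) :
    dist x y ≤ A * (dist (f x) (f y) + B) :=
  (one_div_mul_sub_le_iff hA).1 (h x y hx hy).1

theorem tendsto_cobounded {f : X → Y} {s : Set X} (h : IsQuasiIsometricOn A B f s) (hA : 0 < A) :
    Tendsto f (cobounded X ⊓ 𝓟 s) (cobounded Y) := by
  rcases s.eq_empty_or_nonempty with rfl | ⟨c, hc⟩
  · simp
  rw [← Metric.tendsto_dist_right_atTop_iff (f c)]
  have hdist : Tendsto (fun x => dist x c) (cobounded X ⊓ 𝓟 s) atTop :=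
    (Metric.tendsto_dist_right_cobounded_atTop c).mono_left inf_le_left
  have hlower : Tendsto (fun x => 1 / A * dist x c - B) (cobounded X ⊓ 𝓟 s) atTop :=
    tendsto_atTop_add_const_right _ (-B) (hdist.const_mul_atTop (by positivity))
  refine tendsto_atTop_mono' _ ?_ hlower
  filter_upwards [mem_inf_of_right (mem_principal_self s)] with x hx
  exact (h x c hx hc).1

theorem dist_succ_le {u : ℕ → Y} {a : ℕ} (h : IsQuasiIsometricOn A B u (Set.Ici a)) {x : ℕ}
    (hx : a ≤ x) : dist (u x) (u (x + 1)) ≤ A + B := by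
  simpa [Nat.dist_eq] using (h x (x + 1) hx (Nat.le_succ_of_le hx)).2

theorem tendsto_atTop {f : ℕ → ℕ} {a : ℕ} (h : IsQuasiIsometricOn A B f (Set.Ici a))
    (hA : 0 < A) : Tendsto f atTop atTop := by
  have hf := h.tendsto_cobounded hA
  rwa [Metric.cobounded_eq_cocompact, cocompact_eq_cofinite, Nat.cofinite_eq_atTop,
    inf_eq_left.2 (le_principal_iff.2 (Ici_mem_atTop a))] at hf

theorem lt_of_add_lt {u : ℕ → ℝ} {a : ℕ} (h : IsQuasiIsometricOn A B u (Set.Ici a)) (hA : 0 < A)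
    (hlim : Tendsto u atTop atTop) {x y : ℕ} (hx : a ≤ x) (hy : a ≤ y)
    (hxy : x + A * (A + 2 * B) < y) : u x < u y := by
  by_contra! hle
  obtain ⟨k, hyk, hk, hk'⟩ := exists_le_and_lt_succ_of_tendsto_atTop hlim hle
  have hak : a ≤ k := hy.trans hyk
  have hclose : dist (u k) (u x) ≤ A + B :=
    (Real.dist_left_le_of_mem_uIcc (Set.mem_uIcc_of_le hk hk'.le)).trans (h.dist_succ_le hak)
  have hnear : (k : ℝ) - x ≤ A * (A + 2 * B) :=
    calc (k : ℝ) - x ≤ dist k x := le_abs_self _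
      _ ≤ A * (dist (u k) (u x) + B) := h.dist_le_mul_dist_add hA hak hx
      _ ≤ A * (A + B + B) := by gcongr
      _ = A * (A + 2 * B) := by ring
  have hcast : (y : ℝ) ≤ k := Nat.cast_le.2 hyk
  linarith

end IsQuasiIsometricOn

end QuasiIsometricOn

/-- `f` is strictly increasing at scale `C` from `a` onwards: moving more than `C` to the right
increases the value, while nothing is said about shorter moves. -/
def CoarselyStrictMonoFrom {α : Type*} [LT α] (C a : ℕ) (f : ℕ → α) : Prop :=
  ∀ x y, a ≤ x → x + C < y → f x < f y

namespace CoarselyStrictMonoFrom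

variable {C a : ℕ} {f : ℕ → ℕ}

theorem add_lt (h : CoarselyStrictMonoFrom C a f) {x y k : ℕ} (hx : a ≤ x)
    (hxy : x + (C + 1) * k + C < y) : f x + k < f y := by
  induction k generalizing y with
  | zero => exact h x y hx hxy
  | succ k ih =>
    rw [mul_add_one] at hxy
    have hprev : f x + k < f (x + (C + 1) * k + (C + 1)) := ih (by lia)
    have hlast : f (x + (C + 1) * k + (C + 1)) < f y := h _ _ (by lia) (by lia)
    lia

theorem tendsto_atTop (h : CoarselyStrictMonoFrom C a f) : Tendsto f atTop atTop := by
  refine Filter.tendsto_atTop.2 fun b => ?_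
  filter_upwards [eventually_gt_atTop (a + (C + 1) * b + C)] with n hn
  exact (Nat.le_add_left b (f a)).trans (h.add_lt le_rfl hn).le

theorem dist_le_mul_dist_add_one (h : CoarselyStrictMonoFrom C a f) {x y : ℕ} (hx : a ≤ x)
    (hy : a ≤ y) : dist x y ≤ (C + 1) * (dist (f x) (f y) + 1) := by
  wlog hxy : x ≤ y generalizing x y
  · simpa only [dist_comm] using this hy hx (le_of_not_ge hxy)
  -- Were `y` any larger, the gain `f y - f x` would exceed itself.
  have hgap : y ≤ x + (C + 1) * (f y - f x) + C := by
    by_contra! hlt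
    exact (h.add_lt hx hlt).not_ge le_add_tsub
  calc dist x y = (y : ℝ) - x := dist_eq_natCast_sub_of_le hxy
    _ ≤ (C + 1) * (f y - f x : ℕ) + C := by
        have : (y : ℝ) ≤ x + (C + 1) * (f y - f x : ℕ) + C := by exact_mod_cast hgap
        linarith
    _ ≤ (C + 1) * dist (f x) (f y) + (C + 1) := by
        gcongr
        · exact natCast_tsub_le_dist _ _
        · linarith
    _ = (C + 1) * (dist (f x) (f y) + 1) := by ring

theorem isQuasiIsometricOn (h : CoarselyStrictMonoFrom C a f)
    (hstep : ∀ x, a ≤ x → dist (f x) (f (x + 1)) ≤ C) :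
    IsQuasiIsometricOn (C + 1) 1 f (Set.Ici a) := by
  refine fun x y hx hy => ⟨?_, ?_⟩
  · exact (one_div_mul_sub_le_iff (by positivity)).2 (h.dist_le_mul_dist_add_one hx hy)
  · have hlip := dist_le_mul_dist_of_dist_succ_le hstep hx hy
    linarith [dist_nonneg (x := x) (y := y)]

theorem exists_dist_le (h : CoarselyStrictMonoFrom C a f) (ha : f a ≤ C)
    (hstep : ∀ x, a ≤ x → dist (f x) (f (x + 1)) ≤ C) (y : ℕ) :
    ∃ x, a ≤ x ∧ dist (f x) y ≤ C := by
  rcases le_total (f a) y with hay | hya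
  · exact exists_dist_le_of_dist_succ_le (u := fun x => (f x : ℝ)) hstep
      (tendsto_natCast_atTop_atTop.comp h.tendsto_atTop) (Nat.cast_le.2 hay)
  · refine ⟨a, le_rfl, ?_⟩
    rw [Nat.dist_eq, ← Nat.cast_sub hya, Nat.abs_cast]
    exact_mod_cast (Nat.sub_le _ _).trans ha

end CoarselyStrictMonoFrom

theorem IsQuasiIsometricOn.coarselyStrictMonoFrom {A B : ℝ} {C a : ℕ} {f : ℕ → ℕ}
    (h : IsQuasiIsometricOn A B f (Set.Ici a)) (hA : 0 < A) (hC : A * (A + 2 * B) ≤ C) :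
    CoarselyStrictMonoFrom C a f := by
  intro x y hx hxy
  have hcast : IsQuasiIsometricOn A B (fun n => (f n : ℝ)) (Set.Ici a) := h
  have hlim : Tendsto (fun n => (f n : ℝ)) atTop atTop :=
    tendsto_natCast_atTop_atTop.comp (h.tendsto_atTop hA)
  have hfar : (x : ℝ) + C < y := mod_cast hxy
  exact Nat.cast_lt.1 (hcast.lt_of_add_lt hA hlim hx (by lia) (by linarith))

theorem quasiIso_iff_single_constant_general (a : ℕ) (f : ℕ → ℕ) :
    (∃ A B : ℝ, 1 ≤ A ∧ 0 ≤ B ∧ IsQuasiIsometricOn A B f (Set.Ici a) ∧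
        ∀ y : ℕ, a ≤ y → ∃ x : ℕ, a ≤ x ∧ dist (f x) y ≤ A) ↔
      ∃ C : ℕ, 1 ≤ C ∧ f a ≤ C ∧
        (∀ x, a ≤ x → |(f x : ℤ) - (f (x + 1) : ℤ)| ≤ (C : ℤ)) ∧
        CoarselyStrictMonoFrom C a f := by
  constructor
  · rintro ⟨A, B, hA, hB, h, -⟩
    obtain ⟨C, hfC, hABC, hC⟩ : ∃ C : ℕ, f a ≤ C ∧ A + B ≤ C ∧ A * (A + 2 * B) ≤ C := by
      simpa using exists_nat_ge (max (f a : ℝ) (max (A + B) (A * (A + 2 * B))))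
    refine ⟨C, ?_, hfC, fun x hx => ?_, h.coarselyStrictMonoFrom (by linarith) hC⟩
    · exact_mod_cast show (1 : ℝ) ≤ C by linarith
    · have hstep := (h.dist_succ_le hx).trans hABC
      rw [Nat.dist_eq] at hstep
      exact_mod_cast hstep
  · rintro ⟨C, -, hfC, hjump, hmono⟩
    have hstep : ∀ x, a ≤ x → dist (f x) (f (x + 1)) ≤ C := fun x hx => by
      rw [Nat.dist_eq]
      exact_mod_cast hjump x hx
    refine ⟨C + 1, 1, by simp, zero_le_one, hmono.isQuasiIsometricOn hstep, fun y _ => ?_⟩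
    obtain ⟨x, hx, hxy⟩ := hmono.exists_dist_le hfC hstep y
    exact ⟨x, hx, hxy.trans (by simp)⟩

/-- A color-preserving `f` is a quasi-isometric reduction from `α`
to `β` (in the two-constant `(A,B)` sense, with density of the image) if and only if
there is an integer `C ≥ 1` with `f 1 ≤ C`, `|f x − f (x+1)| ≤ C` for all positions
`x`, and `x + C < y → f x < f y`. -/
theorem quasiIso_iff_single_constant {Γ : Type*} [Fintype Γ] (α β : ℕ → Γ)
    (f : ℕ → ℕ)
    (hpos : ∀ x, 1 ≤ x → 1 ≤ f x)
    (hcolor : ∀ x, 1 ≤ x → β (f x) = α x) :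
    (∃ A B : ℝ, 1 ≤ A ∧ 0 ≤ B ∧
        (∀ x y : ℕ, 1 ≤ x → 1 ≤ y →
          (1 / A) * |(x : ℝ) - (y : ℝ)| - B ≤ |(f x : ℝ) - (f y : ℝ)| ∧
            |(f x : ℝ) - (f y : ℝ)| ≤ A * |(x : ℝ) - (y : ℝ)| + B) ∧
        (∀ y : ℕ, 1 ≤ y → ∃ x : ℕ, 1 ≤ x ∧ |(f x : ℝ) - (y : ℝ)| ≤ A)) ↔
      (∃ C : ℕ, 1 ≤ C ∧ f 1 ≤ C ∧
        (∀ x, 1 ≤ x → |((f x : ℤ)) - (f (x + 1) : ℤ)| ≤ (C : ℤ)) ∧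
        (∀ x y, 1 ≤ x → x + C < y → f x < f y)) :=
  quasiIso_iff_single_constant_general 1 f
end

section
/- Let Σ be a finite alphabet, let a ∈ Σ, let α and β be infinite strings over Σ, and let f be a C-quasi-isometry from α to β. Suppose there is a positive integer K such that every interval of K consecutive positions of α contains at least one occurrence of the letter a. Then every interval of K·C consecutive positions of β contains at least one occurrence of the letter a. -/
/-!
Condition (b) forces `f → ∞`, so there is a first occurrence `y` of `a` in `α` with `p ≤ f y`.
Either `y ≤ K`, and then `f y ≤ y * C ≤ K * C`; or the `K` positions just before `y` contain an
occurrence `x` of `a`, which by minimality of `y` has `f x < p`, and condition (a) gives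
`f y ≤ f x + (y - x) * C < p + K * C`.
-/

open Filter

theorem le_add_nsmul_of_succ_le {M : Type*} [AddMonoid M] [Preorder M] [AddRightMono M]
    {f : ℕ → M} {c : M} {m : ℕ} (hstep : ∀ x, m ≤ x → f (x + 1) ≤ f x + c) (d : ℕ) :
    f (m + d) ≤ f m + d • c := by
  induction d with
  | zero => simp
  | succ d ih =>
    calc f (m + d + 1) ≤ f (m + d) + c := hstep _ (Nat.le_add_right m d)
      _ ≤ f m + d • c + c := by gcongr
      _ = f m + (d + 1) • c := by rw [succ_nsmul, add_assoc]

theorem tendsto_atTop_of_forall_add_lt {f : ℕ → ℕ} {m C : ℕ}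
    (hf : ∀ x y, m ≤ x → x + C < y → f x < f y) : Tendsto f atTop atTop := by
  have hmono : StrictMono fun n ↦ f (m + n * (C + 1)) :=
    strictMono_nat_of_lt_succ fun n ↦
      hf _ _ (Nat.le_add_right _ _) (by rw [Nat.succ_mul]; omega)
  refine tendsto_atTop.2 fun n ↦ ?_
  filter_upwards [eventually_gt_atTop (m + n * (C + 1) + C)] with x hx
  exact hmono.le_apply.trans (hf _ _ (Nat.le_add_right _ _) hx).le

theorem exists_apply_mem_Ico_of_tendsto_atTop {M : Type*} [AddCommMonoid M] [LinearOrder M]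
    [IsOrderedCancelAddMonoid M] {f : ℕ → M} {c p : M} {P : ℕ → Prop} {K : ℕ} (hc : 0 ≤ c)
    (hone : f 1 ≤ c) (hstep : ∀ x, 1 ≤ x → f (x + 1) ≤ f x + c) (htop : Tendsto f atTop atTop)
    (hP : ∀ n, 1 ≤ n → ∃ x, n ≤ x ∧ x < n + K ∧ P x) (hp : 0 < p) :
    ∃ x, 1 ≤ x ∧ P x ∧ f x ∈ Set.Ico p (p + K • c) := by
  classical
  have hgrowth {x y : ℕ} (hx : 1 ≤ x) (hxy : x ≤ y) : f y ≤ f x + (y - x) • c := by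
    simpa only [Nat.add_sub_cancel' hxy] using
      le_add_nsmul_of_succ_le (fun z hz ↦ hstep z (hx.trans hz)) (y - x)
  have hex : ∃ y, 1 ≤ y ∧ P y ∧ p ≤ f y := by
    obtain ⟨N, hN⟩ := eventually_atTop.1 (htop.eventually_ge_atTop p)
    obtain ⟨y, hNy, -, hPy⟩ := hP (N + 1) (Nat.le_add_left 1 N)
    exact ⟨y, by omega, hPy, hN y (by omega)⟩
  obtain ⟨y, ⟨hy, hPy, hpy⟩, hmin⟩ := Nat.findX hex
  refine ⟨y, hy, hPy, hpy, ?_⟩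
  rcases le_or_gt y K with hyK | hKy
  · calc f y ≤ f 1 + (y - 1) • c := hgrowth le_rfl hy
      _ ≤ c + (y - 1) • c := by gcongr
      _ = y • c := by rw [← succ_nsmul', Nat.sub_add_cancel hy]
      _ ≤ K • c := by gcongr
      _ < p + K • c := lt_add_of_pos_left _ hp
  · obtain ⟨x, hyx, hxy, hPx⟩ := hP (y - K) (by omega)
    rw [Nat.sub_add_cancel hKy.le] at hxy
    have hx : 1 ≤ x := by omega
    have hfx : f x < p := not_le.1 fun hpx ↦ hmin x hxy ⟨hx, hPx, hpx⟩
    calc f y ≤ f x + (y - x) • c := hgrowth hx hxy.le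
      _ < p + (y - x) • c := by gcongr
      _ ≤ p + K • c := by gcongr; omega

namespace IsQI

variable {Γ : Type*} {C : ℕ} {α β : ℕ → Γ} {f : ℕ → ℕ}

theorem apply_succ_le (hf : IsQI C α β f) {x : ℕ} (hx : 1 ≤ x) : f (x + 1) ≤ f x + C := by
  obtain ⟨-, -, -, -, hstep, -⟩ := hf
  have := (abs_le.1 (hstep x hx)).2
  omega

theorem tendsto_atTop (hf : IsQI C α β f) : Tendsto f atTop atTop := by
  obtain ⟨-, -, -, -, -, hlt⟩ := hf
  exact tendsto_atTop_of_forall_add_lt hlt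

end IsQI

theorem letter_in_every_interval_general {Γ : Type*} {a : Γ} {C K : ℕ} {α β : ℕ → Γ} {f : ℕ → ℕ}
    (hf : IsQI C α β f) (hα : ∀ p, 1 ≤ p → ∃ x, p ≤ x ∧ x < p + K ∧ α x = a) :
    ∀ p, 1 ≤ p → ∃ x, p ≤ x ∧ x < p + K * C ∧ β x = a := by
  have ⟨_, _, hcolor, hone, _, _⟩ := hf
  intro p hp
  obtain ⟨x, hx, hxa, hpx, hxp⟩ := exists_apply_mem_Ico_of_tendsto_atTop (Nat.zero_le C) hone
    (fun _ ↦ hf.apply_succ_le) hf.tendsto_atTop hα hp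
  exact ⟨f x, hpx, hxp, (hcolor x hx).trans hxa⟩

/-- If `f` is a `C`-quasi-isometry from `α` to `β` and every
interval of `K` consecutive positions of `α` contains an occurrence of the letter
`a`, then every interval of `K·C` consecutive positions of `β` contains an
occurrence of `a`. -/
theorem letter_in_every_interval {Γ : Type*} [Fintype Γ] (a : Γ) (C : ℕ)
    (α β : ℕ → Γ) (f : ℕ → ℕ) (hf : IsQI C α β f) (K : ℕ) (hK : 1 ≤ K)
    (hα : ∀ p, 1 ≤ p → ∃ x, p ≤ x ∧ x < p + K ∧ α x = a) :
    ∀ p, 1 ≤ p → ∃ x, p ≤ x ∧ x < p + K * C ∧ β x = a := by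
  exact letter_in_every_interval_general hf hα
end

section
/- (Small Cross-Over Lemma) Let α and β be infinite strings over a finite alphabet and let f be a C-quasi-isometry from α to β. Then for all positions n, m with n < m, f(n) − f(m) ≤ C², i.e. f(n) ≤ f(m) + C². -/
theorem le_add_nsmul_of_le_succ_add {M : Type*} [AddCommMonoid M] [Preorder M]
    [IsOrderedAddMonoid M] {f : ℕ → M} {D : M} {n m : ℕ} (hnm : n ≤ m)
    (hstep : ∀ x, n ≤ x → f x ≤ f (x + 1) + D) : f n ≤ f m + (m - n) • D := by
  induction m, hnm using Nat.le_induction with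
  | base => simp
  | succ m hnm ih =>
    calc f n ≤ f m + (m - n) • D := ih
      _ ≤ (f (m + 1) + D) + (m - n) • D := by gcongr; exact hstep m hnm
      _ = f (m + 1) + (m + 1 - n) • D := by
        rw [Nat.succ_sub hnm, succ_nsmul', add_assoc]

theorem small_crossover_general {M : Type*} [AddCommMonoid M] [Preorder M]
    [IsOrderedAddMonoid M] {f : ℕ → M} {a C : ℕ} {D : M} (hD : 0 ≤ D)
    (hstep : ∀ x, a ≤ x → f x ≤ f (x + 1) + D)
    (hfar : ∀ x y, a ≤ x → x + C < y → f x ≤ f y) :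
    ∀ n m, a ≤ n → n < m → f n ≤ f m + C • D := by
  intro n m hn hnm
  rcases le_or_gt m (n + C) with hm_near | hm_far
  · calc f n ≤ f m + (m - n) • D :=
        le_add_nsmul_of_le_succ_add hnm.le fun x hx ↦ hstep x (hn.trans hx)
      _ ≤ f m + C • D := by gcongr; exact Nat.sub_le_iff_le_add'.mpr hm_near
  · exact (hfar n m hn hm_far).trans (le_add_of_nonneg_right (nsmul_nonneg hD C))

namespace IsQI

variable {Γ : Type*} {C x y : ℕ} {α β : ℕ → Γ} {f : ℕ → ℕ}

theorem le_succ_add (hf : IsQI C α β f) (hx : 1 ≤ x) : f x ≤ f (x + 1) + C := by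
  obtain ⟨-, -, -, -, hstep, -⟩ := hf
  have := neg_le_of_abs_le (hstep x hx)
  lia

theorem lt_of_add_lt (hf : IsQI C α β f) (hx : 1 ≤ x) (hxy : x + C < y) : f x < f y :=
  hf.2.2.2.2.2 x y hx hxy

end IsQI

/-- Small Cross-Over Lemma. If `f` is a `C`-quasi-isometry from
`α` to `β`, then for all positions `n < m`, `f n − f m ≤ C²`. -/
theorem small_crossover {Γ : Type*} [Fintype Γ] (C : ℕ) (α β : ℕ → Γ) (f : ℕ → ℕ)
    (hf : IsQI C α β f) :
    ∀ n m, 1 ≤ n → n < m → f n ≤ f m + C ^ 2 := by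
  simpa only [smul_eq_mul, ← sq] using small_crossover_general (f := f) C.zero_le
    (fun _ hx ↦ hf.le_succ_add hx) (fun _ _ hx hxy ↦ (hf.lt_of_add_lt hx hxy).le)
end

section
/- Let α be an infinite string over a finite alphabet and let β and γ be two distinct infinite strings with β ≡_mqi α and γ ≡_mqi α. Then there exists an infinite string δ with δ ≡_mqi α such that β ≤_1qi δ and γ ≤_1qi δ. -/
/-!
Two positions with the same image under a `C`-quasi-isometry from `β` to `α` are at distance at
most `C`. Let `δ` repeat every letter of `α` exactly `K > C` times, and send `x` to the copy of the
letter at its image selected by `x % K`. Residues modulo `K` separate distinct positions at distance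
at most `C`, so this lift is injective, while `δ ≡_mqi α` because `K` is constant.
Taking `K` larger than the constants for both `β` and `γ` gives a common `δ`.
-/

section

variable {Γ : Type*} {α β : ℕ → Γ} {C K : ℕ} {f : ℕ → ℕ}

theorem isQI_id (α : ℕ → Γ) : IsQI 1 α α id :=
  ⟨le_rfl, fun _ hx => hx, fun _ _ => rfl, le_rfl, fun _ _ => by simp, fun _ _ _ hxy => by
    simp only [id]; omega⟩

theorem IsQI.le_add_of_apply_le (hf : IsQI C α β f) {x y : ℕ} (hx : 1 ≤ x) (hyx : f y ≤ f x) :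
    y ≤ x + C := by
  obtain ⟨-, -, -, -, -, hmono⟩ := hf
  by_contra! hxy
  exact (hmono x y hx hxy).not_ge hyx

/-- The string in which every letter of `α` is repeated `K` times. Since positions start at `1`,
the copies of the letter at position `q` are at the positions `p` with `⌈p / K⌉ = q`. -/
def blowUp (K : ℕ) (α : ℕ → Γ) : ℕ → Γ := fun p => α (p ⌈/⌉ K)

/-- The lift of a position map `f` into `α` to one into `blowUp K α`: the position `x` goes to the
copy of `f x` determined by `x % K`, counted backwards from the end of the block `⌈p / K⌉ = f x`.
The subtraction does not truncate when `1 ≤ f x` and `0 < K`. -/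
def blockLift (K : ℕ) (f : ℕ → ℕ) (x : ℕ) : ℕ := K * f x - x % K

theorem primrec_ceilDiv_const (K : ℕ) : Primrec fun p : ℕ => p ⌈/⌉ K := by
  simp only [Nat.ceilDiv_eq_add_pred_div]
  exact Primrec.nat_div.comp
    (Primrec.nat_sub.comp (Primrec.nat_add.comp .id (.const K)) (.const 1)) (.const K)

theorem mul_ceilDiv_lt_add (hK : 0 < K) (p : ℕ) : K * (p ⌈/⌉ K) < p + K := by
  rw [Nat.ceilDiv_eq_add_pred_div]
  exact (Nat.mul_div_le _ K).trans_lt (by omega)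

theorem isQI_ceilDiv (hK : 0 < K) (α : ℕ → Γ) : IsQI K (blowUp K α) α fun p => p ⌈/⌉ K := by
  have lt_ceilDiv_iff {q p : ℕ} : q < p ⌈/⌉ K ↔ K * q < p := (gc_mul_ceilDiv hK).lt_iff_lt
  refine ⟨hK, fun p hp => lt_ceilDiv_iff.2 hp, fun _ _ => rfl, ?_, fun p _ => ?_,
    fun p q _ hpq => lt_ceilDiv_iff.2 ((mul_ceilDiv_lt_add hK p).trans hpq)⟩
  · exact (ceilDiv_le_iff_le_mul hK).2 (Nat.mul_pos hK hK)
  · have hlower : p ⌈/⌉ K ≤ (p + 1) ⌈/⌉ K := (gc_mul_ceilDiv hK).monotone_l p.le_succ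
    have hupper : (p + 1) ⌈/⌉ K ≤ p ⌈/⌉ K + 1 := by
      rw [ceilDiv_le_iff_le_mul hK, Nat.mul_succ]
      exact Nat.add_le_add (le_smul_ceilDiv hK) hK
    rw [abs_le]
    constructor <;> push_cast <;> omega

theorem blockLift_le (K : ℕ) (f : ℕ → ℕ) (x : ℕ) : blockLift K f x ≤ K * f x :=
  Nat.sub_le _ _

theorem lt_blockLift_add (hK : 0 < K) (f : ℕ → ℕ) (x : ℕ) : K * f x < blockLift K f x + K := by
  have := Nat.mod_lt x hK
  unfold blockLift
  omega

theorem ceilDiv_blockLift (hK : 0 < K) (f : ℕ → ℕ) (x : ℕ) : blockLift K f x ⌈/⌉ K = f x := by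
  refine le_antisymm ((ceilDiv_le_iff_le_mul hK).2 (blockLift_le K f x)) ?_
  have hlt : K * f x < K * (blockLift K f x ⌈/⌉ K + 1) :=
    (lt_blockLift_add hK f x).trans_le (Nat.add_le_add_right (le_smul_ceilDiv hK) K)
  exact Nat.lt_succ_iff.1 (Nat.lt_of_mul_lt_mul_left hlt)

theorem computable_blockLift (K : ℕ) (hf : Computable f) : Computable (blockLift K f) :=
  Primrec.nat_sub.to_comp.comp (Primrec.nat_mul.to_comp.comp (.const K) hf)
    (Primrec.nat_mod.to_comp.comp .id (.const K))

theorem IsQI.isQI_blockLift (hf : IsQI C α β f) (hK : 0 < K) :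
    IsQI (K * (C + 1)) α (blowUp K β) (blockLift K f) := by
  obtain ⟨-, hpos, hcolor, hone, hstep, hmono⟩ := hf
  refine ⟨Nat.mul_pos hK C.succ_pos, fun x hx => ?_, fun x hx => ?_, ?_, fun x hx => ?_,
    fun x y hx hxy => ?_⟩
  · have hblock : K * 1 ≤ K * f x := Nat.mul_le_mul_left K (hpos x hx)
    have := lt_blockLift_add hK f x
    omega
  · rw [blowUp, ceilDiv_blockLift hK, hcolor x hx]
  · exact (blockLift_le K f 1).trans (Nat.mul_le_mul_left K (hone.trans C.le_succ))
  · obtain ⟨hlower, hupper⟩ := abs_le.1 (hstep x hx)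
    have hlower' := mul_le_mul_of_nonneg_left hlower K.cast_nonneg
    have hupper' := mul_le_mul_of_nonneg_left hupper K.cast_nonneg
    have hle := blockLift_le K f x
    have hle_succ := blockLift_le K f (x + 1)
    have hlt := lt_blockLift_add hK f x
    have hlt_succ := lt_blockLift_add hK f (x + 1)
    zify at hle hle_succ hlt hlt_succ
    push_cast
    rw [abs_le]
    constructor <;> linarith
  · have hC : C ≤ K * (C + 1) := C.le_succ.trans (Nat.le_mul_of_pos_left _ hK)
    have hblock : K * (f x + 1) ≤ K * f y := Nat.mul_le_mul_left K (hmono x y hx (by omega))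
    have := blockLift_le K f x
    have := lt_blockLift_add hK f y
    rw [Nat.mul_succ] at hblock
    omega

theorem IsQI.injOn_blockLift (hf : IsQI C α β f) (hCK : C < K) :
    Set.InjOn (blockLift K f) (Set.Ici 1) := by
  intro x hx y hy hxy
  have hK : 0 < K := C.zero_le.trans_lt hCK
  have himage : f x = f y := by
    rw [← ceilDiv_blockLift hK f x, hxy, ceilDiv_blockLift hK]
  have hmod : x ≡ y [MOD K] := by
    have hblock : K * 1 ≤ K * f y := Nat.mul_le_mul_left K (hf.2.1 y hy)
    have := Nat.mod_lt x hK
    have := Nat.mod_lt y hK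
    unfold blockLift at hxy
    rw [himage] at hxy
    unfold Nat.ModEq
    omega
  have hxy_le : y ≤ x + C := hf.le_add_of_apply_le hx himage.ge
  have hyx_le : x ≤ y + C := hf.le_add_of_apply_le hy himage.le
  exact hmod.eq_of_abs_lt (by rw [abs_lt]; omega)

theorem IsQI.oqired_blowUp (hf : IsQI C α β f) (hcomp : Computable f) (hCK : C < K) :
    OQIred α (blowUp K β) :=
  ⟨K * (C + 1), blockLift K f, hf.isQI_blockLift (C.zero_le.trans_lt hCK),
    computable_blockLift K hcomp, fun _ _ hx hy hxy => hf.injOn_blockLift hCK hx hy hxy⟩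

theorem blowUp_mqiequiv (hK : 0 < K) (α : ℕ → Γ) : MQIequiv (blowUp K α) α :=
  ⟨⟨K, _, isQI_ceilDiv hK α, (primrec_ceilDiv_const K).to_comp⟩,
    ⟨K * (1 + 1), _, (isQI_id α).isQI_blockLift hK, computable_blockLift K .id⟩⟩

end

theorem mqi_degree_common_upper_bound_general {Γ : Type*} {α β γ : ℕ → Γ}
    (hβ : MQIred β α) (hγ : MQIred γ α) :
    ∃ δ : ℕ → Γ, MQIequiv δ α ∧ OQIred β δ ∧ OQIred γ δ := by
  obtain ⟨C, f, hf, hf_comp⟩ := hβ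
  obtain ⟨D, g, hg, hg_comp⟩ := hγ
  exact ⟨blowUp (C + D + 1) α, blowUp_mqiequiv (by omega) α,
    hf.oqired_blowUp hf_comp (by omega), hg.oqired_blowUp hg_comp (by omega)⟩

/-- Any two distinct strings `β, γ` in the mqi-degree of `α` have a
common upper bound `δ` in that degree with respect to 1qi-reductions. -/
theorem mqi_degree_common_upper_bound {Γ : Type*} [Fintype Γ] (α β γ : ℕ → Γ)
    (hβγ : β ≠ γ) (hβ : MQIequiv β α) (hγ : MQIequiv γ α) :
    ∃ δ : ℕ → Γ, MQIequiv δ α ∧ OQIred β δ ∧ OQIred γ δ :=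
  mqi_degree_common_upper_bound_general hβ.1 hγ.1
end

section
/- Let α be an infinite string over a finite alphabet and let β and γ be two distinct infinite strings with β ≡_mqi α and γ ≡_mqi α. Then there exists an infinite string δ with δ ≡_mqi α such that δ ≤_1qi β and δ ≤_1qi γ. -/
/-!
Let `f` reduce `β` to `γ`, and keep only the positions of `β` at which `f` takes a value for the
first time. By condition (b), positions with the same value under `f` are at most `C` apart, so the
kept positions have bounded gaps. Hence their increasing enumeration is an injective reduction to
`β` of the string `δ` read off there, and composing it with `f` gives an injective reduction to `γ`.
Conversely `β` reduces to `δ` by moving each position to the first one with the same value: both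
have the same color, because it is the color of their common image in `γ`.
-/

section Computability

variable {A : Type*} [Primcodable A] {p : ℕ → Prop}

theorem computable_decide_eq [DecidableEq A] : Computable₂ fun a b : A => decide (a = b) :=
  Primrec.eq.decide.to_comp

theorem computable_update_zero {f : ℕ → A} (hf : Computable f) (a : A) :
    Computable (Function.update f 0 a) :=
  (Computable.nat_casesOn Computable.id (Computable.const a)
    (hf.comp (Computable.succ.comp Computable.snd)).to₂).of_eq fun x => by cases x <;> simp

theorem computable_nat_find {r : A → ℕ → Prop} [DecidableRel r]
    (hr : Computable₂ fun a n => decide (r a n)) (hex : ∀ a, ∃ n, r a n) :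
    Computable fun a => Nat.find (hex a) :=
  Partrec.of_eq (Partrec.rfind (p := fun a n => Part.some (decide (r a n))) hr) fun a =>
    Part.eq_some_iff.2 <| Nat.mem_rfind.2
      ⟨by simpa using Nat.find_spec (hex a), fun hm => by simpa using Nat.find_min (hex a) hm⟩

theorem computable_nat_count [DecidablePred p] (hp : ComputablePred p) :
    Computable (Nat.count p) := by
  have hstep : Computable₂ fun (_ : ℕ) (q : ℕ × ℕ) => bif decide (p q.1) then q.2 + 1 else q.2 :=
    Computable.cond (hp.decide.comp (Computable.fst.comp Computable.snd))
      (Computable.succ.comp (Computable.snd.comp Computable.snd))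
      (Computable.snd.comp Computable.snd)
  refine (Computable.nat_rec Computable.id (Computable.const 0) hstep).of_eq fun n => ?_
  induction n with
  | zero => simp
  | succ n ih =>
    by_cases hn : p n <;> simp_all [Nat.count_succ]

theorem computable_nat_nth (hp : ComputablePred p) (hinf : {x | p x}.Infinite) :
    Computable (Nat.nth p) := by
  classical
  have hnth (n x : ℕ) : n < Nat.count p (x + 1) ↔ Nat.nth p n ≤ x := by
    rw [← Nat.lt_succ_iff]
    exact (Nat.lt_nth_iff_count_lt hinf)
  have hex (n : ℕ) : ∃ x, n < Nat.count p (x + 1) := ⟨_, (hnth n _).2 le_rfl⟩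
  have hdec : Computable₂ fun n x => decide (n < Nat.count p (x + 1)) :=
    Primrec.nat_lt.decide.to_comp.comp Computable.fst
      ((computable_nat_count hp).comp (Computable.succ.comp Computable.snd))
  refine (computable_nat_find hdec hex).of_eq fun n => ?_
  simp only [Nat.find_eq_iff, hnth]
  exact ⟨le_rfl, fun _ => Nat.not_le_of_lt⟩

end Computability

/-- The position map of a `C`-quasi-isometry, extended to all of `ℕ` by the convention `f 0 = 0`.
The value at `0`, which is not a position, absorbs the bound on `f 1` of condition (a) into the
bound on consecutive values, which is written without subtraction; it forces `1 ≤ C`. -/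
structure IsQIMap (C : ℕ) (f : ℕ → ℕ) : Prop where
  map_zero : f 0 = 0
  pos : ∀ {x}, 1 ≤ x → 1 ≤ f x
  succ_le : ∀ x, f (x + 1) ≤ f x + C
  le_succ : ∀ x, f x ≤ f (x + 1) + C
  lt : ∀ {x y}, x + C < y → f x < f y

namespace IsQIMap

variable {C D : ℕ} {f g : ℕ → ℕ}

theorem abs_sub_le_abs_sub_mul (hf : IsQIMap C f) (x y : ℕ) :
    |(f x : ℤ) - f y| ≤ |(x : ℤ) - y| * C := by
  wlog hxy : y ≤ x generalizing x y
  · simpa only [abs_sub_comm] using this y x (Nat.le_of_not_le hxy)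
  have hadd (k : ℕ) : |(f (y + k) : ℤ) - f y| ≤ k * C := by
    induction k with
    | zero => simp
    | succ k ih =>
      have hup := hf.succ_le (y + k)
      have hdown := hf.le_succ (y + k)
      rw [abs_le] at ih ⊢
      rw [← add_assoc]
      push_cast
      constructor <;> linarith
  obtain ⟨k, rfl⟩ := Nat.exists_eq_add_of_le hxy
  simpa using hadd k

theorem add_lt (hf : IsQIMap C f) (k : ℕ) {x y : ℕ} (hxy : x + k * (C + 1) + C < y) :
    f x + k < f y := by
  induction k generalizing x with
  | zero => exact hf.lt (by omega)
  | succ k ih =>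
    have hblock : f x < f (x + (C + 1)) := hf.lt (by omega)
    have hrest : f (x + (C + 1)) + k < f y := ih (by linarith)
    omega

theorem comp (hg : IsQIMap D g) (hf : IsQIMap C f) :
    IsQIMap (D * (C + 1) + C) (g ∘ f) := by
  have hstep (x : ℕ) : |(g (f (x + 1)) : ℤ) - g (f x)| ≤ C * D := by
    refine (hg.abs_sub_le_abs_sub_mul _ _).trans ?_
    gcongr
    simpa using hf.abs_sub_le_abs_sub_mul (x + 1) x
  simp only [abs_le] at hstep
  have hconst : (C * D : ℤ) ≤ (D * (C + 1) + C : ℕ) := by push_cast; linarith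
  exact
    { map_zero := by simp only [Function.comp_apply, hf.map_zero, hg.map_zero]
      pos := fun hx => hg.pos (hf.pos hx)
      succ_le := fun x => by have := hstep x; simp only [Function.comp_apply]; omega
      le_succ := fun x => by have := hstep x; simp only [Function.comp_apply]; omega
      lt := fun hxy => hg.lt (hf.add_lt D (by linarith)) }

theorem isQI {Γ : Type*} {α β : ℕ → Γ} (hf : IsQIMap C f) (hcol : ∀ x, 1 ≤ x → β (f x) = α x) :
    IsQI C α β f := by
  have hone : f 1 ≤ C := by simpa only [hf.map_zero, zero_add] using hf.succ_le 0
  exact ⟨(hf.pos le_rfl).trans hone, fun _ => hf.pos, hcol, hone,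
    fun x _ => by simpa using hf.abs_sub_le_abs_sub_mul (x + 1) x, fun _ _ _ => hf.lt⟩

end IsQIMap

section Reductions

variable {Γ : Type*} {C : ℕ} {α β γ : ℕ → Γ} {f : ℕ → ℕ}

theorem IsQI.isQIMap_update (hf : IsQI C α β f) : IsQIMap C (Function.update f 0 0) := by
  obtain ⟨-, hpos, -, hone, hstep, hlt⟩ := hf
  simp only [abs_le] at hstep
  have hsucc (x : ℕ) : Function.update f 0 0 (x + 1) = f (x + 1) :=
    Function.update_of_ne x.succ_ne_zero ..
  refine ⟨Function.update_self .., fun {x} hx => ?_, fun x => ?_, fun x => ?_, fun {x y} hxy => ?_⟩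
  · obtain ⟨x, rfl⟩ := Nat.exists_eq_add_one.2 hx
    exact hsucc x ▸ hpos _ hx
  · rcases x with _ | x
    · simpa using hone
    · have := hstep (x + 1) (by omega)
      simp only [hsucc]
      omega
  · rcases x with _ | x
    · simp
    · have := hstep (x + 1) (by omega)
      simp only [hsucc]
      omega
  · obtain ⟨y, rfl⟩ := Nat.exists_eq_add_one.2 (Nat.zero_lt_of_lt hxy)
    rcases x with _ | x
    · simpa [Nat.one_le_iff_ne_zero, Nat.pos_iff_ne_zero] using hpos (y + 1) (by omega)
    · simpa using hlt (x + 1) (y + 1) (by omega) hxy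

theorem mqiRed_iff : MQIred α β ↔
    ∃ C f, IsQIMap C f ∧ Computable f ∧ ∀ x, 1 ≤ x → β (f x) = α x := by
  constructor
  · rintro ⟨C, f, hf, hcomp⟩
    have ⟨_, _, hcol, _⟩ := hf
    refine ⟨C, _, hf.isQIMap_update, computable_update_zero hcomp 0, fun x hx => ?_⟩
    rw [Function.update_of_ne (Nat.ne_zero_of_lt hx)]
    exact hcol x hx
  · rintro ⟨C, f, hf, hcomp, hcol⟩
    exact ⟨C, f, hf.isQI hcol, hcomp⟩

theorem OQIred.of_isQIMap (hf : IsQIMap C f) (hcomp : Computable f) (hinj : Function.Injective f)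
    (hcol : ∀ x, 1 ≤ x → β (f x) = α x) : OQIred α β :=
  ⟨C, f, hf.isQI hcol, hcomp, fun _ _ _ _ h => hinj h⟩

theorem OQIred.mqiRed (h : OQIred α β) : MQIred α β :=
  let ⟨C, f, hf, hcomp, _⟩ := h
  ⟨C, f, hf, hcomp⟩

theorem MQIred.trans (hαβ : MQIred α β) (hβγ : MQIred β γ) : MQIred α γ := by
  obtain ⟨C, f, hf, hfcomp, hfcol⟩ := mqiRed_iff.1 hαβ
  obtain ⟨D, g, hg, hgcomp, hgcol⟩ := mqiRed_iff.1 hβγ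
  exact mqiRed_iff.2 ⟨_, g ∘ f, hg.comp hf, hgcomp.comp hfcomp,
    fun x hx => (hgcol _ (hf.pos hx)).trans (hfcol x hx)⟩

theorem MQIequiv.trans (hαβ : MQIequiv α β) (hβγ : MQIequiv β γ) : MQIequiv α γ :=
  ⟨hαβ.1.trans hβγ.1, hβγ.2.trans hαβ.2⟩

end Reductions

section Syndetic

/-- The set of natural numbers satisfying `p` is syndetic with gap `C`: every window of `C + 1`
consecutive numbers meets it. -/
def IsSyndetic (C : ℕ) (p : ℕ → Prop) : Prop :=
  ∀ x, ∃ y, x ≤ y ∧ y ≤ x + C ∧ p y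

variable {C : ℕ} {p : ℕ → Prop}

theorem IsSyndetic.infinite (hp : IsSyndetic C p) : {x | p x}.Infinite :=
  Set.infinite_of_forall_exists_gt fun x =>
    let ⟨y, hxy, _, hy⟩ := hp (x + 1)
    ⟨y, hy, hxy⟩

theorem IsSyndetic.isQIMap_nth (hp : IsSyndetic C p) (hp0 : p 0) :
    IsQIMap (C + 1) (Nat.nth p) := by
  have hmono : StrictMono (Nat.nth p) := Nat.nth_strictMono hp.infinite
  refine ⟨Nat.nth_zero_of_zero hp0, fun hx => hx.trans hmono.le_apply, fun n => ?_,
    fun n => (hmono.monotone n.le_succ).trans (Nat.le_add_right _ _), fun hxy => hmono (by omega)⟩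
  obtain ⟨y, hny, hyn, hy⟩ := hp (Nat.nth p n + 1)
  by_contra! hgap
  have hle : y ≤ Nat.nth p n := Nat.le_nth_of_lt_nth_succ (by omega) hy
  omega

theorem IsSyndetic.isQIMap_count [DecidablePred p] (hp : IsSyndetic C p) (hp0 : p 0) :
    IsQIMap (C + 1) (Nat.count p) := by
  have hmono : Monotone (Nat.count p) := Nat.count_monotone p
  refine ⟨Nat.count_zero p, fun hx => ?_, fun n => ?_,
    fun n => (hmono n.le_succ).trans (Nat.le_add_right _ _), fun {x y} hxy => ?_⟩
  · simpa [Nat.count_one, hp0] using hmono hx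
  · rw [Nat.count_succ]
    split_ifs <;> omega
  · obtain ⟨z, hxz, hzx, hz⟩ := hp x
    exact (hmono hxz).trans_lt (Nat.count_strict_mono hz (by omega))

end Syndetic

section FirstOccurrence

variable {A : Type*} [DecidableEq A]

/-- The first argument at which `f` takes the value `f x`. -/
def firstOcc (f : ℕ → A) (x : ℕ) : ℕ :=
  Nat.find (⟨x, rfl⟩ : ∃ y, f y = f x)

/-- `f` takes the value `f x` at `x` for the first time. -/
def IsFirstOcc (f : ℕ → A) (x : ℕ) : Prop :=
  firstOcc f x = x

instance (f : ℕ → A) : DecidablePred (IsFirstOcc f) :=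
  fun x => inferInstanceAs (Decidable (firstOcc f x = x))

theorem apply_firstOcc (f : ℕ → A) (x : ℕ) : f (firstOcc f x) = f x :=
  Nat.find_spec (⟨x, rfl⟩ : ∃ y, f y = f x)

theorem firstOcc_le (f : ℕ → A) (x : ℕ) : firstOcc f x ≤ x :=
  Nat.find_min' _ rfl

theorem firstOcc_congr {f : ℕ → A} {x y : ℕ} (h : f x = f y) : firstOcc f x = firstOcc f y := by
  simp only [firstOcc, h]

theorem isFirstOcc_firstOcc (f : ℕ → A) (x : ℕ) : IsFirstOcc f (firstOcc f x) :=
  firstOcc_congr (apply_firstOcc f x)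

theorem isFirstOcc_zero (f : ℕ → A) : IsFirstOcc f 0 :=
  Nat.le_zero.1 (firstOcc_le f 0)

theorem injOn_isFirstOcc (f : ℕ → A) : Set.InjOn f {x | IsFirstOcc f x} :=
  fun x hx y hy h => calc
    x = firstOcc f x := hx.symm
    _ = firstOcc f y := firstOcc_congr h
    _ = y := hy

theorem computable_firstOcc [Primcodable A] {f : ℕ → A} (hf : Computable f) :
    Computable (firstOcc f) :=
  computable_nat_find (r := fun x y => f y = f x)
    (computable_decide_eq.comp (hf.comp Computable.snd) (hf.comp Computable.fst))
    fun x => ⟨x, rfl⟩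

theorem computablePred_isFirstOcc [Primcodable A] {f : ℕ → A} (hf : Computable f) :
    ComputablePred (IsFirstOcc f) :=
  Computable.computablePred
    (computable_decide_eq.comp (computable_firstOcc hf) Computable.id)

namespace IsQIMap

variable {C : ℕ} {f : ℕ → ℕ}

theorem le_firstOcc_add (hf : IsQIMap C f) (x : ℕ) : x ≤ firstOcc f x + C := by
  by_contra! hlt
  exact (hf.lt hlt).ne (apply_firstOcc f x)

theorem isSyndetic_isFirstOcc (hf : IsQIMap C f) : IsSyndetic C (IsFirstOcc f) := fun x =>
  ⟨firstOcc f (x + C), by have := hf.le_firstOcc_add (x + C); omega, firstOcc_le f (x + C),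
    isFirstOcc_firstOcc f (x + C)⟩

theorem isQIMap_firstOcc (hf : IsQIMap C f) : IsQIMap (C + 1) (firstOcc f) where
  map_zero := isFirstOcc_zero f
  pos {x} hx := by
    by_contra! h0
    have hfx : f x = 0 := by rw [← apply_firstOcc f x, Nat.lt_one_iff.1 h0, hf.map_zero]
    have := hf.pos hx
    omega
  succ_le x := by
    have := hf.le_firstOcc_add x
    have := firstOcc_le f (x + 1)
    omega
  le_succ x := by
    have := hf.le_firstOcc_add (x + 1)
    have := firstOcc_le f x
    omega
  lt {x y} hxy := by
    have := hf.le_firstOcc_add y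
    have := firstOcc_le f x
    omega

end IsQIMap

end FirstOccurrence

/-- The string read off from `β` at the positions where `f` takes a value for the first time.
Since `0` always counts as such a place, `Nat.nth` numbers the actual positions from `1`. -/
noncomputable def firstOccString {Γ : Type*} (β : ℕ → Γ) (f : ℕ → ℕ) : ℕ → Γ :=
  β ∘ Nat.nth (IsFirstOcc f)

section FirstOccString

variable {Γ : Type*} {C : ℕ} {β γ : ℕ → Γ} {f : ℕ → ℕ}

theorem oqiRed_firstOccString_left (hf : IsQIMap C f) (hcomp : Computable f) :
    OQIred (firstOccString β f) β := by
  have hsynd := hf.isSyndetic_isFirstOcc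
  exact .of_isQIMap (hsynd.isQIMap_nth (isFirstOcc_zero f))
    (computable_nat_nth (computablePred_isFirstOcc hcomp) hsynd.infinite)
    (Nat.nth_injective hsynd.infinite) fun _ _ => rfl

theorem oqiRed_firstOccString_right (hf : IsQIMap C f) (hcomp : Computable f)
    (hcol : ∀ x, 1 ≤ x → γ (f x) = β x) : OQIred (firstOccString β f) γ := by
  have hsynd := hf.isSyndetic_isFirstOcc
  have hnth := hsynd.isQIMap_nth (isFirstOcc_zero f)
  have hinj : Function.Injective (f ∘ Nat.nth (IsFirstOcc f)) := fun m n h =>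
    Nat.nth_injective hsynd.infinite <| injOn_isFirstOcc f
      (Nat.nth_mem_of_infinite hsynd.infinite m) (Nat.nth_mem_of_infinite hsynd.infinite n) h
  exact .of_isQIMap (hf.comp hnth)
    (hcomp.comp (computable_nat_nth (computablePred_isFirstOcc hcomp) hsynd.infinite)) hinj
    fun n hn => hcol _ (hnth.pos hn)

theorem mqiRed_firstOccString (hf : IsQIMap C f) (hcomp : Computable f)
    (hcol : ∀ x, 1 ≤ x → γ (f x) = β x) : MQIred β (firstOccString β f) := by
  have hcount := hf.isSyndetic_isFirstOcc.isQIMap_count (isFirstOcc_zero f)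
  refine mqiRed_iff.2 ⟨_, Nat.count (IsFirstOcc f) ∘ firstOcc f, hcount.comp hf.isQIMap_firstOcc,
    (computable_nat_count (computablePred_isFirstOcc hcomp)).comp (computable_firstOcc hcomp),
    fun x hx => ?_⟩
  calc firstOccString β f (Nat.count (IsFirstOcc f) (firstOcc f x))
      = β (firstOcc f x) := congrArg β (Nat.nth_count (isFirstOcc_firstOcc f x))
    _ = γ (f (firstOcc f x)) := (hcol _ (hf.isQIMap_firstOcc.pos hx)).symm
    _ = γ (f x) := congrArg γ (apply_firstOcc f x)
    _ = β x := hcol x hx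

end FirstOccString

theorem MQIred.exists_common_lower_bound {Γ : Type*} {β γ : ℕ → Γ} (h : MQIred β γ) :
    ∃ δ : ℕ → Γ, MQIequiv δ β ∧ OQIred δ β ∧ OQIred δ γ := by
  obtain ⟨C, f, hf, hcomp, hcol⟩ := mqiRed_iff.1 h
  have hleft : OQIred (firstOccString β f) β := oqiRed_firstOccString_left hf hcomp
  exact ⟨firstOccString β f, ⟨hleft.mqiRed, mqiRed_firstOccString hf hcomp hcol⟩, hleft,
    oqiRed_firstOccString_right hf hcomp hcol⟩

theorem mqi_degree_common_lower_bound_general {Γ : Type*} {α β γ : ℕ → Γ}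
    (hβ : MQIequiv β α) (hγ : MQIred α γ) :
    ∃ δ : ℕ → Γ, MQIequiv δ α ∧ OQIred δ β ∧ OQIred δ γ := by
  obtain ⟨δ, hδβ, hleft, hright⟩ := (hβ.1.trans hγ).exists_common_lower_bound
  exact ⟨δ, hδβ.trans hβ, hleft, hright⟩

/-- Any two distinct strings `β, γ` in the mqi-degree of `α` have a
common lower bound `δ` in that degree with respect to 1qi-reductions. -/
theorem mqi_degree_common_lower_bound {Γ : Type*} [Fintype Γ] (α β γ : ℕ → Γ)
    (hβγ : β ≠ γ) (hβ : MQIequiv β α) (hγ : MQIequiv γ α) :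
    ∃ δ : ℕ → Γ, MQIequiv δ α ∧ OQIred δ β ∧ OQIred δ γ :=
  mqi_degree_common_lower_bound_general hβ hγ.2
end

section
/- Let Σ = {0,1} and let α = 10^ω (the string with 1 at position 1 and 0 at all other positions). Then: (i) an infinite string β over Σ satisfies β ≡_mqi α if and only if β contains a finite, positive number of occurrences of 1; (ii) every β with β ≡_mqi α satisfies β ≡_1qi 1^k 0^ω for exactly one k ≥ 1, namely k equal to the number of occurrences of 1 in β; (iii) for all 1 ≤ j < k, 1^j 0^ω ≤_1qi 1^k 0^ω but 1^k 0^ω is not 1qi-reducible to 1^j 0^ω. Hence [α]_mqi is the union of a strictly ascending chain of 1qi-degrees [1 0^ω]_1qi < [1 1 0^ω]_1qi < [1 1 1 0^ω]_1qi < ⋯. -/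
/-- The string `1^k 0^ω` over `{0,1}`: the letter `1` at positions `1, …, k` and `0`
at all other positions. -/
def onesStr (k : ℕ) : ℕ → Fin 2 := fun n => if 1 ≤ n ∧ n ≤ k then 1 else 0

open Filter Set

/-!
Where two strings are both blank beyond some position `N`, any colour-preserving map `g` on the
non-blank positions extends to a computable quasi-isometry: send every blank position `x` to
`N + x`. The shift is injective and misses the values of `g`, so the extension is injective as
soon as `g` is. Hence, between such strings, reducibility only depends on the number of
occurrences of each letter other than the blank: `≤_1qi` says that none of these numbers decreases,
and `≤_mqi` that none of them drops from positive to zero.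
-/

/-- The positions (numbered from 1, so `0` is excluded) at which the string `α` has the
letter `a`. -/
def occurrences {Γ : Type*} (α : ℕ → Γ) (a : Γ) : Set ℕ := {x | 1 ≤ x ∧ α x = a}

section FiniteModification

variable {α σ : Type*} [Primcodable α] [Primcodable σ]

theorem computable_update [DecidableEq α] {f : α → σ} (hf : Computable f) (a : α) (b : σ) :
    Computable (Function.update f a b) := by
  have h_eq : Computable fun x => decide (x = a) :=
    (Primrec.eq.decide.comp Primrec.id (Primrec.const a)).to_comp
  refine (Computable.cond h_eq (Computable.const b) hf).of_eq fun x => ?_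
  rw [Bool.cond_decide, Function.update_apply]

theorem computable_of_finite_ne {f g : α → σ} (hg : Computable g) (h : {x | f x ≠ g x}.Finite) :
    Computable f := by
  classical
  suffices h_off : ∀ s : Set α, s.Finite → ∀ f : α → σ, (∀ x ∉ s, f x = g x) → Computable f from
    h_off _ h f fun x hx => not_not.mp hx
  intro s hs
  induction s, hs using Set.Finite.induction_on with
  | empty => exact fun f hf => hg.of_eq fun x => (hf x (notMem_empty x)).symm
  | @insert a s _ _ ih =>
    intro f hf
    have h_update : Computable (Function.update f a (g a)) := by
      refine ih _ fun x hx => ?_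
      by_cases hxa : x = a
      · rw [hxa, Function.update_self]
      · rw [Function.update_of_ne hxa, hf x (by simp [hxa, hx])]
    simpa using computable_update h_update a (f a)

end FiniteModification

section Occurrences

variable {Γ : Type*} {α β : ℕ → Γ} {C : ℕ} {f : ℕ → ℕ}

theorem IsQI.mapsTo_occurrences (hf : IsQI C α β f) (a : Γ) :
    MapsTo f (occurrences α a) (occurrences β a) := by
  obtain ⟨-, h_pos, h_color, -⟩ := hf
  exact fun x hx => ⟨h_pos x hx.1, (h_color x hx.1).trans hx.2⟩

theorem IsQI.finite_preimage (hf : IsQI C α β f) {s : Set ℕ} (hs : s.Finite) :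
    (f ⁻¹' s).Finite := by
  obtain ⟨-, -, -, -, -, h_mono⟩ := hf
  refine hs.preimage' fun b _ => ?_
  by_cases h : ∃ x, 1 ≤ x ∧ f x = b
  · obtain ⟨x, hx, rfl⟩ := h
    refine (finite_Iic (x + C)).subset fun y hy => mem_Iic.mpr (not_lt.mp fun hxy => ?_)
    exact (h_mono x y hx hxy).ne' hy
  · refine (finite_singleton 0).subset fun x hx => ?_
    by_contra hx0
    exact h ⟨x, Nat.one_le_iff_ne_zero.mpr hx0, hx⟩

theorem IsQI.finite_occurrences (hf : IsQI C α β f) {a : Γ} (h : (occurrences β a).Finite) :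
    (occurrences α a).Finite :=
  (hf.finite_preimage h).subset (hf.mapsTo_occurrences a)

theorem MQIred.finite_occurrences (h : MQIred α β) {a : Γ} (hβ : (occurrences β a).Finite) :
    (occurrences α a).Finite :=
  let ⟨_, _, hf, _⟩ := h
  hf.finite_occurrences hβ

theorem MQIred.nonempty_occurrences (h : MQIred α β) {a : Γ} (hα : (occurrences α a).Nonempty) :
    (occurrences β a).Nonempty :=
  let ⟨_, _, hf, _⟩ := h
  (hf.mapsTo_occurrences a).nonempty hα

theorem OQIred.encard_occurrences_le (h : OQIred α β) (a : Γ) :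
    (occurrences α a).encard ≤ (occurrences β a).encard :=
  let ⟨_, _, hf, _, h_inj⟩ := h
  encard_le_encard_of_injOn (hf.mapsTo_occurrences a) fun x hx y hy => h_inj x y hx.1 hy.1

end Occurrences

section ShiftBlanks

variable {Γ : Type*} {α β : ℕ → Γ} {b : Γ} {N : ℕ} {g : ℕ → ℕ}

theorem lt_of_mem_occurrences (hβ : ∀ x, N ≤ x → β x = b) {a : Γ} (ha : a ≠ b) {x : ℕ}
    (hx : x ∈ occurrences β a) : x < N :=
  not_le.mp fun hNx => ha (hx.2.symm.trans (hβ x hNx))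

theorem isQI_of_eventually_shift {f : ℕ → ℕ} (h_pos : ∀ x, 1 ≤ x → 1 ≤ f x)
    (h_color : ∀ x, 1 ≤ x → β (f x) = α x) (h_le : ∀ x, 1 ≤ x → f x ≤ N + x)
    (h_shift : ∀ x, N ≤ x → f x = N + x) : IsQI (2 * N + 1) α β f := by
  refine ⟨by omega, h_pos, h_color, (h_le 1 le_rfl).trans (by omega), fun x hx => ?_,
    fun x y hx hxy => ?_⟩
  · have h_succ := h_le (x + 1) (by omega)
    rcases le_or_gt N x with hNx | hxN
    · rw [h_shift x hNx, h_shift (x + 1) (by omega), abs_le]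
      omega
    · have h_self := h_le x hx
      rw [abs_le]
      omega
  · have h_self := h_le x hx
    rw [h_shift y (by omega)]
    omega

/-- The extension to all positions of a map `g` between the non-blank positions of two strings,
`α` being the source and `b` the blank letter: blank positions are shifted by `N`. -/
def shiftBlanks [DecidableEq Γ] (α : ℕ → Γ) (b : Γ) (N : ℕ) (g : ℕ → ℕ) (x : ℕ) : ℕ :=
  if α x = b then N + x else g x

variable [DecidableEq Γ]

theorem shiftBlanks_of_eq {x : ℕ} (h : α x = b) : shiftBlanks α b N g x = N + x := if_pos h

theorem shiftBlanks_of_ne {x : ℕ} (h : α x ≠ b) : shiftBlanks α b N g x = g x := if_neg h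

theorem computable_shiftBlanks (hα : ∀ x, N ≤ x → α x = b) :
    Computable (shiftBlanks α b N g) := by
  have h_add : Computable fun x => N + x :=
    (Primrec.nat_add.comp (Primrec.const N) Primrec.id).to_comp
  refine computable_of_finite_ne h_add ((finite_Iio N).subset fun x hx => ?_)
  exact not_le.mp fun hNx => hx (shiftBlanks_of_eq (hα x hNx))

theorem isQI_shiftBlanks (hα : ∀ x, N ≤ x → α x = b) (hβ : ∀ x, N ≤ x → β x = b)
    (hg : ∀ x, 1 ≤ x → α x ≠ b → g x ∈ occurrences β (α x)) :
    IsQI (2 * N + 1) α β (shiftBlanks α b N g) := by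
  have h_values : ∀ x, 1 ≤ x → shiftBlanks α b N g x ∈ occurrences β (α x) := by
    intro x hx
    by_cases h : α x = b
    · rw [shiftBlanks_of_eq h, h]
      exact ⟨by omega, hβ _ (by omega)⟩
    · rw [shiftBlanks_of_ne h]
      exact hg x hx h
  refine isQI_of_eventually_shift (fun x hx => (h_values x hx).1) (fun x hx => (h_values x hx).2)
    (fun x hx => ?_) fun x hx => shiftBlanks_of_eq (hα x hx)
  by_cases h : α x = b
  · exact (shiftBlanks_of_eq h).le
  · rw [shiftBlanks_of_ne h]
    exact (lt_of_mem_occurrences hβ h (hg x hx h)).le.trans (by omega)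

theorem injOn_shiftBlanks (hg : ∀ x, 1 ≤ x → α x ≠ b → g x < N)
    (hg_inj : InjOn g {x | 1 ≤ x ∧ α x ≠ b}) : InjOn (shiftBlanks α b N g) (Ici 1) := by
  intro x hx y hy hxy
  by_cases hxb : α x = b <;> by_cases hyb : α y = b <;>
    simp only [shiftBlanks, hxb, hyb, if_true, if_false] at hxy
  · omega
  · have := hg y hy hyb
    omega
  · have := hg x hx hxb
    omega
  · exact hg_inj ⟨hx, hxb⟩ ⟨hy, hyb⟩ hxy

end ShiftBlanks

section EventuallyBlank

variable {Γ : Type*} {α β : ℕ → Γ} {b : Γ}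

theorem finite_occurrences_of_eventually_eq (hα : ∀ᶠ x in atTop, α x = b) {a : Γ} (ha : a ≠ b) :
    (occurrences α a).Finite := by
  obtain ⟨N, hN⟩ := eventually_atTop.mp hα
  exact (finite_Iio N).subset fun x hx => lt_of_mem_occurrences hN ha hx

theorem mqired_iff_of_eventually_eq (hα : ∀ᶠ x in atTop, α x = b) (hβ : ∀ᶠ x in atTop, β x = b) :
    MQIred α β ↔ ∀ a, a ≠ b → (occurrences α a).Nonempty → (occurrences β a).Nonempty := by
  classical
  refine ⟨fun h a _ => h.nonempty_occurrences, fun h => ?_⟩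
  obtain ⟨N, hN⟩ := eventually_atTop.mp (hα.and hβ)
  have h_target : ∀ x, ∃ y, 1 ≤ x → α x ≠ b → y ∈ occurrences β (α x) := by
    intro x
    by_cases hx : 1 ≤ x ∧ α x ≠ b
    · exact (h (α x) hx.2 ⟨x, hx.1, rfl⟩).imp fun y hy _ _ => hy
    · exact ⟨0, fun hx1 hxb => (hx ⟨hx1, hxb⟩).elim⟩
  choose g hg using h_target
  exact ⟨2 * N + 1, shiftBlanks α b N g,
    isQI_shiftBlanks (fun x hx => (hN x hx).1) (fun x hx => (hN x hx).2) hg,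
    computable_shiftBlanks fun x hx => (hN x hx).1⟩

theorem oqired_iff_of_eventually_eq (hα : ∀ᶠ x in atTop, α x = b) (hβ : ∀ᶠ x in atTop, β x = b) :
    OQIred α β ↔ ∀ a, a ≠ b → (occurrences α a).encard ≤ (occurrences β a).encard := by
  classical
  refine ⟨fun h a _ => h.encard_occurrences_le a, fun h => ?_⟩
  obtain ⟨N, hN⟩ := eventually_atTop.mp (hα.and hβ)
  have h_embed : ∀ a, ∃ g : ℕ → ℕ, a ≠ b →
      MapsTo g (occurrences α a) (occurrences β a) ∧ InjOn g (occurrences α a) := by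
    intro a
    by_cases ha : a = b
    · exact ⟨id, fun hab => (hab ha).elim⟩
    · obtain ⟨g, hg⟩ :=
        (finite_occurrences_of_eventually_eq hα ha).exists_injOn_of_encard_le (h a ha)
      exact ⟨g, fun _ => hg⟩
  choose g hg using h_embed
  have hg_mem : ∀ x, 1 ≤ x → α x ≠ b → g (α x) x ∈ occurrences β (α x) :=
    fun x hx hxb => (hg (α x) hxb).1 ⟨hx, rfl⟩
  have hg_inj : InjOn (fun x => g (α x) x) {x | 1 ≤ x ∧ α x ≠ b} := by
    intro x hx y hy (hxy : g (α x) x = g (α y) y)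
    have h_letter : α x = α y := by
      rw [← (hg_mem x hx.1 hx.2).2, hxy, (hg_mem y hy.1 hy.2).2]
    rw [← h_letter] at hxy
    exact (hg (α x) hx.2).2 ⟨hx.1, rfl⟩ ⟨hy.1, h_letter.symm⟩ hxy
  have h_inj := injOn_shiftBlanks
    (fun x hx hxb => lt_of_mem_occurrences (fun y hy => (hN y hy).2) hxb (hg_mem x hx hxb)) hg_inj
  exact ⟨2 * N + 1, shiftBlanks α b N fun x => g (α x) x,
    isQI_shiftBlanks (fun x hx => (hN x hx).1) (fun x hx => (hN x hx).2) hg_mem,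
    computable_shiftBlanks fun x hx => (hN x hx).1, fun x y hx hy => @h_inj x hx y hy⟩

end EventuallyBlank

section Binary

variable {α β : ℕ → Fin 2}

theorem eventually_eq_zero_of_finite_occurrences (h : (occurrences β 1).Finite) :
    ∀ᶠ x in atTop, β x = 0 := by
  obtain ⟨N, hN⟩ := h.bddAbove
  filter_upwards [eventually_gt_atTop N] with x hx
  by_contra hx0
  exact hx.not_ge (hN ⟨by omega, Fin.eq_one_of_ne_zero _ hx0⟩)

theorem mqired_iff_of_finite_occurrences (hα : (occurrences α 1).Finite)
    (hβ : (occurrences β 1).Finite) :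
    MQIred α β ↔ ((occurrences α 1).Nonempty → (occurrences β 1).Nonempty) := by
  rw [mqired_iff_of_eventually_eq (eventually_eq_zero_of_finite_occurrences hα)
    (eventually_eq_zero_of_finite_occurrences hβ)]
  simp [Fin.forall_fin_two]

theorem oqired_iff_of_finite_occurrences (hα : (occurrences α 1).Finite)
    (hβ : (occurrences β 1).Finite) :
    OQIred α β ↔ (occurrences α 1).ncard ≤ (occurrences β 1).ncard := by
  rw [oqired_iff_of_eventually_eq (eventually_eq_zero_of_finite_occurrences hα)
    (eventually_eq_zero_of_finite_occurrences hβ), ← Nat.cast_le (α := ℕ∞), hα.cast_ncard_eq,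
    hβ.cast_ncard_eq]
  simp [Fin.forall_fin_two]

theorem occurrences_onesStr (k : ℕ) : occurrences (onesStr k) 1 = Icc 1 k := by
  ext x
  simp [occurrences, onesStr]

theorem finite_occurrences_onesStr (k : ℕ) : (occurrences (onesStr k) 1).Finite :=
  occurrences_onesStr k ▸ finite_Icc 1 k

theorem ncard_occurrences_onesStr (k : ℕ) : (occurrences (onesStr k) 1).ncard = k := by
  rw [occurrences_onesStr, ncard_Icc_nat, Nat.add_sub_cancel]

theorem mqiequiv_onesStr_iff {k : ℕ} (hk : 1 ≤ k) :
    MQIequiv β (onesStr k) ↔ (occurrences β 1).Finite ∧ (occurrences β 1).Nonempty := by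
  have h_ones := finite_occurrences_onesStr k
  have h_nonempty : (occurrences (onesStr k) 1).Nonempty :=
    occurrences_onesStr k ▸ nonempty_Icc.mpr hk
  constructor
  · exact fun h => ⟨h.1.finite_occurrences h_ones, h.2.nonempty_occurrences h_nonempty⟩
  · rintro ⟨h_fin, hβ⟩
    exact ⟨(mqired_iff_of_finite_occurrences h_fin h_ones).mpr fun _ => h_nonempty,
      (mqired_iff_of_finite_occurrences h_ones h_fin).mpr fun _ => hβ⟩

theorem oqiequiv_onesStr_iff (hβ : (occurrences β 1).Finite) {k : ℕ} :
    OQIequiv β (onesStr k) ↔ k = (occurrences β 1).ncard := by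
  rw [OQIequiv, oqired_iff_of_finite_occurrences hβ (finite_occurrences_onesStr k),
    oqired_iff_of_finite_occurrences (finite_occurrences_onesStr k) hβ,
    ncard_occurrences_onesStr, ← le_antisymm_iff, eq_comm]

theorem oqired_onesStr_iff {j k : ℕ} : OQIred (onesStr j) (onesStr k) ↔ j ≤ k := by
  rw [oqired_iff_of_finite_occurrences (finite_occurrences_onesStr j)
    (finite_occurrences_onesStr k), ncard_occurrences_onesStr, ncard_occurrences_onesStr]

end Binary

/-- With `α = 1 0^ω`:
(i) `β ≡_mqi α` iff `β` has a finite, positive number of occurrences of `1`;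
(ii) each `β ≡_mqi α` is 1qi-equivalent to `1^k 0^ω` exactly for `k` equal to the
number of occurrences of `1` in `β`;
(iii) for `1 ≤ j < k`, `1^j 0^ω ≤_1qi 1^k 0^ω` but not conversely.
Hence `[α]_mqi` is the union of a strictly ascending chain of 1qi-degrees. -/
theorem mqi_degree_union_ascending_chain :
    (∀ β : ℕ → Fin 2, MQIequiv β (onesStr 1) ↔
        ({x : ℕ | 1 ≤ x ∧ β x = 1}.Finite ∧ {x : ℕ | 1 ≤ x ∧ β x = 1}.Nonempty)) ∧
    (∀ β : ℕ → Fin 2, MQIequiv β (onesStr 1) →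
        ∀ k, 1 ≤ k →
          (OQIequiv β (onesStr k) ↔ k = {x : ℕ | 1 ≤ x ∧ β x = 1}.ncard)) ∧
    (∀ j k, 1 ≤ j → j < k →
        OQIred (onesStr j) (onesStr k) ∧ ¬ OQIred (onesStr k) (onesStr j)) := by
  refine ⟨fun β => mqiequiv_onesStr_iff le_rfl, fun β hβ k _ => ?_, fun j k _ hjk => ?_⟩
  · exact oqiequiv_onesStr_iff ((mqiequiv_onesStr_iff le_rfl).mp hβ).1
  · exact ⟨oqired_onesStr_iff.mpr hjk.le, fun h => hjk.not_ge (oqired_onesStr_iff.mp h)⟩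
end

section
/- Let Σ = {0,1,2} and let α = 120^ω (the string with 1 at position 1, 2 at position 2, and 0 at all other positions). Then: (i) an infinite string β over Σ satisfies β ≡_mqi α if and only if β contains a finite, positive number of occurrences of 1 and a finite, positive number of occurrences of 2; (ii) every β with β ≡_mqi α satisfies β ≡_1qi 1^i 2^j 0^ω for exactly one pair (i, j) with i, j ≥ 1; (iii) for all i, i', j, j' ≥ 1, 1^i 2^j 0^ω ≤_1qi 1^{i'} 2^{j'} 0^ω if and only if i ≤ i' and j ≤ j'. Hence the poset of 1qi-degrees contained in [α]_mqi is order-isomorphic to ℕ × ℕ with the componentwise ordering. -/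
/-- The string `1^i 2^j 0^ω` over `{0,1,2}`: the letter `1` at positions `1, …, i`,
the letter `2` at positions `i+1, …, i+j`, and `0` at all other positions. -/
def ijStr (i j : ℕ) : ℕ → Fin 3 := fun n =>
  if 1 ≤ n ∧ n ≤ i then 1 else if i < n ∧ n ≤ i + j then 2 else 0

/-! Beyond a finite prefix both strings carry only the blank letter, so a reduction is found by
placing each of the finitely many non-blank positions of the source at any position of the target
with the same letter and translating the blanks past the non-blank part of the target. The result
agrees with a translation almost everywhere, hence is a computable quasi-isometry. The only
obstruction is thus the supply of targets: `≤_mqi` needs one position for every letter that occurs,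
and `≤_1qi` needs as many positions as there are in the source. -/

section Computability

variable {σ : Type*} [Primcodable σ]

theorem computable_of_eventuallyEq {f g : ℕ → σ} (hg : Computable g)
    (h : f =ᶠ[Filter.atTop] g) : Computable f := by
  obtain ⟨N, hN⟩ := Filter.eventually_atTop.1 h
  have table : Computable fun x => ((List.range N).map f)[x]? :=
    (Primrec.list_getElem?₁ _).to_comp
  refine (table.option_getD hg).of_eq fun x => ?_
  rcases lt_or_ge x N with hx | hx
  · simp [hx]
  · simp [hx, hN x hx]

end Computability

section Strings

open Filter Set

variable {Γ : Type*} {α β : ℕ → Γ} {z : Γ}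

/-- The set of positions at which the string `α` carries the letter `c`. Strings are indexed from
`1`, so the value `α 0` is disregarded. -/
def letterPositions (α : ℕ → Γ) (c : Γ) : Set ℕ := {x | 1 ≤ x ∧ α x = c}

theorem finite_letterPositions_of_eventually_eq (hα : ∀ᶠ x in atTop, α x = z) {c : Γ}
    (hc : c ≠ z) : (letterPositions α c).Finite := by
  rw [← Nat.cofinite_eq_atTop, eventually_cofinite] at hα
  exact hα.subset fun x hx hz => hc (hx.2.symm.trans hz)

theorem eventually_eq_iff_finite_letterPositions [Finite Γ] :
    (∀ᶠ x in atTop, α x = z) ↔ ∀ c ≠ z, (letterPositions α c).Finite := by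
  refine ⟨fun hα _ => finite_letterPositions_of_eventually_eq hα, fun h => ?_⟩
  rw [← Nat.cofinite_eq_atTop, eventually_cofinite]
  refine ((finite_singleton 0).union ((toFinite {z}ᶜ).biUnion h)).subset fun x hx => ?_
  rcases Nat.eq_zero_or_pos x with rfl | hpos
  · exact .inl rfl
  · exact .inr (mem_biUnion hx ⟨hpos, rfl⟩)

section QuasiIsometry

variable {C : ℕ} {f : ℕ → ℕ}

theorem IsQI.apply_eq (hf : IsQI C α β f) {x : ℕ} (hx : 1 ≤ x) : β (f x) = α x :=
  hf.2.2.1 x hx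

theorem IsQI.lt_of_add_lt_s8 (hf : IsQI C α β f) {x y : ℕ} (hx : 1 ≤ x) (hxy : x + C < y) :
    f x < f y :=
  hf.2.2.2.2.2 x y hx hxy

theorem IsQI.mapsTo_letterPositions (hf : IsQI C α β f) (c : Γ) :
    MapsTo f (letterPositions α c) (letterPositions β c) := fun x hx =>
  ⟨hf.2.1 x hx.1, (hf.apply_eq hx.1).trans hx.2⟩

theorem IsQI.finite_fiber (hf : IsQI C α β f) (y : ℕ) : (f ⁻¹' {y}).Finite := by
  by_contra hinf
  obtain ⟨x, hxy, hx⟩ := Set.Infinite.exists_gt hinf 0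
  obtain ⟨x', hxy', hx'⟩ := Set.Infinite.exists_gt hinf (x + C)
  exact (hf.lt_of_add_lt_s8 hx hx').ne (hxy.trans hxy'.symm)

theorem IsQI.tendsto_atTop_s8 (hf : IsQI C α β f) : Tendsto f atTop atTop := by
  rw [← Nat.cofinite_eq_atTop]
  exact .cofinite_of_finite_preimage_singleton hf.finite_fiber

theorem isQI_of_eq_add {N K : ℕ} (htail : ∀ x, N < x → f x = x + K)
    (hpos : ∀ x, 1 ≤ x → 1 ≤ f x) (hle : ∀ x, 1 ≤ x → f x ≤ x + K)
    (hcolor : ∀ x, 1 ≤ x → β (f x) = α x) : IsQI (N + K + 1) α β f := by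
  refine ⟨by omega, hpos, hcolor, ?_, fun x hx => ?_, fun x y hx hxy => ?_⟩
  · have := hle 1 le_rfl
    omega
  · have := hle x hx
    have := hle (x + 1) (by omega)
    rw [abs_le]
    rcases lt_or_ge N x with hN | hN
    · rw [htail x hN, htail (x + 1) (by omega)]
      omega
    · omega
  · have := hle x hx
    rw [htail y (by omega)]
    omega

theorem exists_computable_isQI_extending (hα : ∀ᶠ x in atTop, α x = z)
    (hβ : ∀ᶠ x in atTop, β x = z) {e : ℕ → ℕ}
    (he : ∀ x, 1 ≤ x → α x ≠ z → e x ∈ letterPositions β (α x)) :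
    ∃ C f K, IsQI C α β f ∧ Computable f ∧
      (∀ x, α x = z → f x = x + K) ∧ ∀ x, α x ≠ z → f x = e x := by
  classical
  obtain ⟨N, hN⟩ := eventually_atTop.1 hα
  obtain ⟨M, hM⟩ := eventually_atTop.1 hβ
  obtain ⟨B, hB⟩ := ((finite_Iio N).image e).bddAbove
  let f : ℕ → ℕ := fun x => if α x = z then x + max M B else e x
  have blank : ∀ x, α x = z → f x = x + max M B := fun x hx => if_pos hx
  have nonblank : ∀ x, α x ≠ z → f x = e x := fun x hx => if_neg hx
  have tail : ∀ x, N < x → f x = x + max M B := fun x hx => blank x (hN x hx.le)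
  have mem : ∀ x, 1 ≤ x → f x ∈ letterPositions β (α x) := fun x hx => by
    by_cases hz : α x = z
    · rw [blank x hz, hz]
      exact ⟨by omega, hM _ (by omega)⟩
    · exact nonblank x hz ▸ he x hx hz
  have le_add : ∀ x, f x ≤ x + max M B := fun x => by
    by_cases hz : α x = z
    · exact (blank x hz).le
    · have hxN : x < N := lt_of_not_ge fun h => hz (hN x h)
      have : e x ≤ B := hB (mem_image_of_mem e hxN)
      rw [nonblank x hz]
      omega
  refine ⟨_, f, max M B, isQI_of_eq_add tail (fun x hx => (mem x hx).1)
    (fun x _ => le_add x) (fun x hx => (mem x hx).2), ?_, blank, nonblank⟩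
  exact computable_of_eventuallyEq
    (Primrec.nat_add.comp .id (.const (max M B))).to_comp
    ((eventually_gt_atTop N).mono tail)

end QuasiIsometry

section ManyOne

theorem MQIred.eventually_eq (h : MQIred α β) (hβ : ∀ᶠ x in atTop, β x = z) :
    ∀ᶠ x in atTop, α x = z := by
  obtain ⟨C, f, hf, -⟩ := h
  filter_upwards [hf.tendsto_atTop_s8.eventually hβ, eventually_ge_atTop 1] with x hz hx
  exact (hf.apply_eq hx).symm.trans hz

theorem MQIred.nonempty_letterPositions (h : MQIred α β) {c : Γ}
    (hc : (letterPositions α c).Nonempty) : (letterPositions β c).Nonempty := by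
  obtain ⟨C, f, hf, -⟩ := h
  exact (hc.image f).mono (hf.mapsTo_letterPositions c).image_subset

theorem mqired_iff (hα : ∀ᶠ x in atTop, α x = z) (hβ : ∀ᶠ x in atTop, β x = z) :
    MQIred α β ↔
      ∀ c ≠ z, (letterPositions α c).Nonempty → (letterPositions β c).Nonempty := by
  refine ⟨fun h c _ => h.nonempty_letterPositions, fun h => ?_⟩
  choose! p hp using h
  obtain ⟨C, f, -, hf, hcomp, -⟩ := exists_computable_isQI_extending hα hβ (e := fun x => p (α x))
    fun x hx hz => hp (α x) hz ⟨x, hx, rfl⟩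
  exact ⟨C, f, hf, hcomp⟩

theorem mqiequiv_iff (hβ : ∀ᶠ x in atTop, β x = z) :
    MQIequiv α β ↔ (∀ᶠ x in atTop, α x = z) ∧
      ∀ c ≠ z, (letterPositions α c).Nonempty ↔ (letterPositions β c).Nonempty := by
  constructor
  · rintro ⟨hαβ, hβα⟩
    exact ⟨hαβ.eventually_eq hβ, fun c _ =>
      ⟨hαβ.nonempty_letterPositions, hβα.nonempty_letterPositions⟩⟩
  · rintro ⟨hα, h⟩
    exact ⟨(mqired_iff hα hβ).2 fun c hc => (h c hc).1,
      (mqired_iff hβ hα).2 fun c hc => (h c hc).2⟩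

end ManyOne

section OneOne

theorem OQIred.encard_letterPositions_le (h : OQIred α β) (c : Γ) :
    (letterPositions α c).encard ≤ (letterPositions β c).encard := by
  obtain ⟨C, f, hf, -, hinj⟩ := h
  exact encard_le_encard_of_injOn (hf.mapsTo_letterPositions c)
    fun x hx y hy => hinj x y hx.1 hy.1

theorem oqired_iff (hα : ∀ᶠ x in atTop, α x = z) (hβ : ∀ᶠ x in atTop, β x = z) :
    OQIred α β ↔
      ∀ c ≠ z, (letterPositions α c).encard ≤ (letterPositions β c).encard := by
  refine ⟨fun h c _ => h.encard_letterPositions_le c, fun h => ?_⟩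
  choose! e he hinj using fun c hc =>
    (finite_letterPositions_of_eventually_eq hα hc).exists_injOn_of_encard_le (h c hc)
  obtain ⟨C, f, K, hf, hcomp, blank, nonblank⟩ :=
    exists_computable_isQI_extending hα hβ (e := fun x => e (α x) x)
      fun x hx hz => he (α x) hz ⟨hx, rfl⟩
  refine ⟨C, f, hf, hcomp, fun x y hx hy hxy => ?_⟩
  have hcolor : α y = α x := by
    rw [← hf.apply_eq hx, ← hf.apply_eq hy, hxy]
  by_cases hz : α x = z
  · rw [blank x hz, blank y (hcolor.trans hz)] at hxy
    exact Nat.add_right_cancel hxy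
  · rw [nonblank x hz, nonblank y (hcolor ▸ hz), hcolor] at hxy
    exact hinj (α x) hz ⟨hx, rfl⟩ ⟨hy, hcolor⟩ hxy

theorem oqiequiv_iff (hα : ∀ᶠ x in atTop, α x = z) (hβ : ∀ᶠ x in atTop, β x = z) :
    OQIequiv α β ↔
      ∀ c ≠ z, (letterPositions α c).encard = (letterPositions β c).encard := by
  simp only [OQIequiv, oqired_iff hα hβ, oqired_iff hβ hα, le_antisymm_iff, forall_and]

end OneOne

end Strings

section TernaryStrings

open Filter Set

theorem forall_fin_three_ne_zero_iff {P : Fin 3 → Prop} : (∀ c ≠ 0, P c) ↔ P 1 ∧ P 2 := by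
  simp [Fin.forall_fin_succ]

theorem eventually_ijStr_eq_zero (i j : ℕ) : ∀ᶠ x in atTop, ijStr i j x = 0 := by
  filter_upwards [eventually_gt_atTop (i + j)] with x hx
  rw [ijStr, if_neg (by omega), if_neg (by omega)]

theorem letterPositions_ijStr_one (i j : ℕ) : letterPositions (ijStr i j) 1 = Icc 1 i := by
  ext x
  simp only [letterPositions, ijStr, mem_ofPred_eq, mem_Icc]
  grind

theorem letterPositions_ijStr_two (i j : ℕ) : letterPositions (ijStr i j) 2 = Ioc i (i + j) := by
  ext x
  simp only [letterPositions, ijStr, mem_ofPred_eq, mem_Ioc]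
  grind

theorem encard_letterPositions_ijStr_one (i j : ℕ) :
    (letterPositions (ijStr i j) 1).encard = i := by
  rw [letterPositions_ijStr_one, ← Finset.coe_Icc, encard_coe_eq_coe_finsetCard, Nat.card_Icc,
    Nat.add_sub_cancel]

theorem encard_letterPositions_ijStr_two (i j : ℕ) :
    (letterPositions (ijStr i j) 2).encard = j := by
  rw [letterPositions_ijStr_two, ← Finset.coe_Ioc, encard_coe_eq_coe_finsetCard, Nat.card_Ioc,
    Nat.add_sub_cancel_left]

theorem mqiequiv_ijStr_one_one_iff {β : ℕ → Fin 3} :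
    MQIequiv β (ijStr 1 1) ↔
      (letterPositions β 1).Finite ∧ (letterPositions β 1).Nonempty ∧
        (letterPositions β 2).Finite ∧ (letterPositions β 2).Nonempty := by
  have nonempty_one : (letterPositions (ijStr 1 1) 1).Nonempty := by
    simp [letterPositions_ijStr_one]
  have nonempty_two : (letterPositions (ijStr 1 1) 2).Nonempty := by
    simp [letterPositions_ijStr_two]
  simp only [mqiequiv_iff (eventually_ijStr_eq_zero 1 1), eventually_eq_iff_finite_letterPositions,
    forall_fin_three_ne_zero_iff, nonempty_one, nonempty_two, iff_true]
  tauto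

theorem oqired_ijStr_iff {i j i' j' : ℕ} :
    OQIred (ijStr i j) (ijStr i' j') ↔ i ≤ i' ∧ j ≤ j' := by
  simp only [oqired_iff (eventually_ijStr_eq_zero i j) (eventually_ijStr_eq_zero i' j'),
    forall_fin_three_ne_zero_iff, encard_letterPositions_ijStr_one,
    encard_letterPositions_ijStr_two, Nat.cast_le]

theorem oqiequiv_ijStr_iff {β : ℕ → Fin 3} (hβ : ∀ᶠ x in atTop, β x = 0) {i j : ℕ} :
    OQIequiv β (ijStr i j) ↔
      (letterPositions β 1).encard = i ∧ (letterPositions β 2).encard = j := by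
  rw [oqiequiv_iff hβ (eventually_ijStr_eq_zero i j), forall_fin_three_ne_zero_iff,
    encard_letterPositions_ijStr_one, encard_letterPositions_ijStr_two]

theorem existsUnique_oqiequiv_ijStr {β : ℕ → Fin 3} (hβ : MQIequiv β (ijStr 1 1)) :
    ∃! p : ℕ × ℕ, 1 ≤ p.1 ∧ 1 ≤ p.2 ∧ OQIequiv β (ijStr p.1 p.2) := by
  obtain ⟨fin_one, nonempty_one, fin_two, nonempty_two⟩ := mqiequiv_ijStr_one_one_iff.1 hβ
  have blank : ∀ᶠ x in atTop, β x = 0 :=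
    eventually_eq_iff_finite_letterPositions.2 (forall_fin_three_ne_zero_iff.2 ⟨fin_one, fin_two⟩)
  obtain ⟨i, hi⟩ := fin_one.exists_encard_eq_coe
  obtain ⟨j, hj⟩ := fin_two.exists_encard_eq_coe
  rw [← one_le_encard_iff_nonempty, hi, Nat.one_le_cast] at nonempty_one
  rw [← one_le_encard_iff_nonempty, hj, Nat.one_le_cast] at nonempty_two
  simp only [oqiequiv_ijStr_iff blank, hi, hj, Nat.cast_inj]
  exact ⟨(i, j), ⟨nonempty_one, nonempty_two, rfl, rfl⟩,
    fun p hp => Prod.ext hp.2.2.1.symm hp.2.2.2.symm⟩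

end TernaryStrings

/-- With `α = 1 2 0^ω` over `{0,1,2}`:
(i) `β ≡_mqi α` iff `β` has a finite, positive number of `1`s and of `2`s;
(ii) each `β ≡_mqi α` is 1qi-equivalent to `1^i 2^j 0^ω` for exactly one pair
`(i, j)` with `i, j ≥ 1`;
(iii) `1^i 2^j 0^ω ≤_1qi 1^{i'} 2^{j'} 0^ω` iff `i ≤ i'` and `j ≤ j'`.
Hence the poset of 1qi-degrees inside `[α]_mqi` is isomorphic to `ℕ × ℕ` with the
componentwise ordering. -/
theorem mqi_degree_iso_nat_squared :
    (∀ β : ℕ → Fin 3, MQIequiv β (ijStr 1 1) ↔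
        ({x : ℕ | 1 ≤ x ∧ β x = 1}.Finite ∧ {x : ℕ | 1 ≤ x ∧ β x = 1}.Nonempty ∧
         {x : ℕ | 1 ≤ x ∧ β x = 2}.Finite ∧ {x : ℕ | 1 ≤ x ∧ β x = 2}.Nonempty)) ∧
    (∀ β : ℕ → Fin 3, MQIequiv β (ijStr 1 1) →
        ∃! p : ℕ × ℕ, 1 ≤ p.1 ∧ 1 ≤ p.2 ∧ OQIequiv β (ijStr p.1 p.2)) ∧
    (∀ i j i' j' : ℕ, 1 ≤ i → 1 ≤ j → 1 ≤ i' → 1 ≤ j' →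
        (OQIred (ijStr i j) (ijStr i' j') ↔ i ≤ i' ∧ j ≤ j')) := by
  exact ⟨fun _ => mqiequiv_ijStr_one_one_iff, fun _ => existsUnique_oqiequiv_ijStr,
    fun _ _ _ _ _ _ _ _ => oqired_ijStr_iff⟩
end

section
/- Let α and β be infinite strings over a finite alphabet and let f be a C-pqi-reduction from α to β (a computable bijective C-quasi-isometry). Then for every position x, |x − f(x)| < 2C² + 1. -/
/-!
By condition (b), the preimages of the positions up to `f x` do not lie beyond `x + C`, so by
surjectivity there are at most `x + C` positions up to `f x`; conversely `f` maps the positions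
before `x - C` injectively to positions before `f x`. Counting gives `|x - f x| ≤ C`.
-/

/-- Condition (b) of a `C`-quasi-isometry on a set `s` of positions: `f` preserves the strict order
of points more than `C` apart. For `C = 0` this is `StrictMonoOn f s`. -/
def CoarselyStrictMonoOn (C : ℕ) (f : ℕ → ℕ) (s : Set ℕ) : Prop :=
  ∀ ⦃x⦄, x ∈ s → ∀ ⦃y⦄, y ∈ s → x + C < y → f x < f y

theorem IsQI.coarselyStrictMonoOn {Γ : Type*} {C : ℕ} {α β : ℕ → Γ} {f : ℕ → ℕ}
    (hf : IsQI C α β f) : CoarselyStrictMonoOn C f (Set.Ici 1) :=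
  fun x hx y _ hxy => hf.2.2.2.2.2 x y hx hxy

namespace CoarselyStrictMonoOn

variable {C a x : ℕ} {f : ℕ → ℕ}

theorem apply_le_add (hf : CoarselyStrictMonoOn C f (Set.Ici a))
    (hsurj : Set.SurjOn f (Set.Ici a) (Set.Ici a)) (hx : a ≤ x) : f x ≤ x + C := by
  have hcover : Set.SurjOn f (Finset.Icc a (x + C)) (Finset.Icc a (f x)) := by
    intro y hy
    obtain ⟨hay, hyx⟩ := Finset.mem_Icc.mp hy
    obtain ⟨z, hz, rfl⟩ := hsurj hay
    have hzx : z ≤ x + C := not_lt.mp fun h => (hf hx hz h).not_ge hyx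
    exact ⟨z, Finset.mem_Icc.mpr ⟨hz, hzx⟩, rfl⟩
  have hcard := Finset.card_le_card_of_surjOn f hcover
  simp only [Nat.card_Icc] at hcard
  omega

theorem le_apply_add (hf : CoarselyStrictMonoOn C f (Set.Ici a))
    (hmaps : Set.MapsTo f (Set.Ici a) (Set.Ici a)) (hinj : Set.InjOn f (Set.Ici a))
    (hx : a ≤ x) : x ≤ f x + C := by
  have hmaps_Ico : Set.MapsTo f (Finset.Ico a (x - C)) (Finset.Ico a (f x)) := by
    intro y hy
    obtain ⟨hay, hyx⟩ := Finset.mem_Ico.mp hy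
    exact Finset.mem_Ico.mpr ⟨hmaps hay, hf hay hx (Nat.add_lt_of_lt_sub hyx)⟩
  have hinj_Ico : Set.InjOn f (Finset.Ico a (x - C)) :=
    hinj.mono fun _ hy => (Finset.mem_Ico.mp hy).1
  have hcard := Finset.card_le_card_of_injOn f hmaps_Ico hinj_Ico
  have hfx : a ≤ f x := hmaps hx
  simp only [Nat.card_Ico] at hcard
  omega

end CoarselyStrictMonoOn

theorem pqi_absdiff_bound_general {C a : ℕ} {f : ℕ → ℕ}
    (hf : CoarselyStrictMonoOn C f (Set.Ici a)) (hbij : Set.BijOn f (Set.Ici a) (Set.Ici a))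
    {x : ℕ} (hx : a ≤ x) : |(x : ℤ) - (f x : ℤ)| ≤ C := by
  have hupper : f x ≤ x + C := hf.apply_le_add hbij.surjOn hx
  have hlower : x ≤ f x + C := hf.le_apply_add hbij.mapsTo hbij.injOn hx
  rw [abs_le]
  omega

/-- If `f` is a `C`-pqi-reduction from `α` to `β` (a computable
bijective `C`-quasi-isometry), then for every position `x`, `|x − f x| < 2C² + 1`. -/
theorem pqi_absdiff_bound {Γ : Type*} [Fintype Γ] (C : ℕ) (α β : ℕ → Γ)
    (f : ℕ → ℕ) (hf : IsQI C α β f) (hcomp : Computable f)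
    (hinj : ∀ x y, 1 ≤ x → 1 ≤ y → f x = f y → x = y)
    (hsurj : ∀ y, 1 ≤ y → ∃ x, 1 ≤ x ∧ f x = y) :
    ∀ x : ℕ, 1 ≤ x → |((x : ℤ)) - (f x : ℤ)| < 2 * (C : ℤ) ^ 2 + 1 := by
  have hbij : Set.BijOn f (Set.Ici 1) (Set.Ici 1) :=
    ⟨hf.2.1, fun x hx y hy => hinj x y hx hy, hsurj⟩
  exact fun x hx => (pqi_absdiff_bound_general hf.coarselyStrictMonoOn hbij hx).trans_lt <| by
    linarith [Int.le_self_sq C, sq_nonneg (C : ℤ)]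
end

section
/- Let α be a computable infinite string over a finite alphabet Σ. If [α]_pqi = [α]_1qi = [α]_mqi (the three classes coincide as sets of infinite strings), then α is a constant string, i.e. α = a^ω for some letter a ∈ Σ; in particular all three degree classes are trivial. -/
/-!
Stretching `α`, i.e. repeating each letter a bounded, computable number of times, does not change
its mqi-degree, so by hypothesis it does not change its pqi-degree either. A color-preserving
quasi-isometric bijection `f` from `α` to a stretched copy of `α` moves positions forward by at most
a constant; following it by the collapsing map back to `α` gives a computable color-preserving map
`g` from the positions of `α` to themselves. Two kinds of stretching are needed.

* Every letter doubled: `g x` is at most about `x / 2`, so the letter at `x` is found by iterating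
  `g` down to boundedly many positions, which makes `α` computable; and `g` is two-to-one and onto,
  so no letter occurs a finite nonzero number of times.
* One letter `b` doubled: among the positions of any other letter `g` is injective, so after an
  initial segment with `k` occurrences of `b`, the next `k` letters are all `b` up to a bounded
  number of exceptions.

Recolor `α` with two colors according to whether a letter equals the first one. If both colors
occurred, hence infinitely often, a long enough window far out would consist almost only of the
first color and almost only of the second.
-/

open Filter Finset

/-- A stretching of the positions of a string by a factor at most `C`: each letter is repeated
between one and `C` times, and `e n` is the position of the last copy of the `n`-th letter. -/
structure IsStretch (C : ℕ) (e : ℕ → ℕ) : Prop where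
  map_zero : e 0 = 0
  strictMono : StrictMono e
  map_succ_le : ∀ n, e (n + 1) ≤ e n + C

/-- The lower adjoint of a stretching `e`: it sends a position to the index of the block of copies
containing it, so that `α ∘ collapse e` is the string `α` stretched by `e`. -/
noncomputable def collapse (e : ℕ → ℕ) (y : ℕ) : ℕ := sInf {x | y ≤ e x}

section Collapse

variable {e : ℕ → ℕ}

theorem gc_collapse (he : StrictMono e) : GaloisConnection (collapse e) e := fun y _ =>
  ⟨fun h => (Nat.sInf_mem (s := {x | y ≤ e x}) ⟨y, he.le_apply⟩).trans (he.monotone h),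
    fun h => Nat.sInf_le h⟩

theorem collapse_apply (he : StrictMono e) (x : ℕ) : collapse e (e x) = x :=
  he.injective ((gc_collapse he).u_l_u_eq_u x)

theorem collapse_eq_succ_iff (he : StrictMono e) {x y : ℕ} :
    collapse e y = x + 1 ↔ e x < y ∧ y ≤ e (x + 1) := by
  rw [← (gc_collapse he).lt_iff_lt, ← (gc_collapse he).le_iff_le]
  omega

theorem collapse_add_le (he : StrictMono e) (y k : ℕ) : collapse e (y + k) ≤ collapse e y + k :=
  (gc_collapse he).l_le <| calc
    y + k ≤ e (collapse e y) + k := Nat.add_le_add_right ((gc_collapse he).le_u_l y) k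
    _ ≤ e (collapse e y + k) := by simpa only [add_comm] using he.add_le_nat k (collapse e y)

theorem computable_collapse (he : StrictMono e) (hc : Computable e) : Computable (collapse e) := by
  have hle : Computable₂ fun y x : ℕ => decide (y ≤ e x) :=
    Primrec.nat_le.decide.to_comp.comp Computable.fst (hc.comp Computable.snd)
  refine (Partrec.rfind hle.partrec₂).of_eq fun y => Part.eq_some_iff.2 (Nat.mem_rfind.2 ⟨?_, ?_⟩)
  · simpa using (gc_collapse he).le_u_l y
  · intro x hx
    simpa using (gc_collapse he).lt_iff_lt.1 hx

end Collapse

namespace IsStretch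

variable {Γ : Type*} {C : ℕ} {e : ℕ → ℕ}

theorem one_le (he : IsStretch C e) : 1 ≤ C := by
  have hlt : e 0 < e 1 := he.strictMono Nat.zero_lt_one
  have hle : e 1 ≤ e 0 + C := he.map_succ_le 0
  omega

theorem collapse_pos (he : IsStretch C e) {y : ℕ} (hy : 1 ≤ y) : 1 ≤ collapse e y :=
  (gc_collapse he.strictMono).lt_iff_lt.2 (he.map_zero.trans_lt hy)

theorem isQI (he : IsStretch C e) (α : ℕ → Γ) : IsQI C α (α ∘ collapse e) e := by
  refine ⟨he.one_le, fun x hx => hx.trans he.strictMono.le_apply, fun x _ => ?_, ?_, fun x _ => ?_,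
    fun x y _ hxy => he.strictMono (by omega)⟩
  · rw [Function.comp_apply, collapse_apply he.strictMono]
  · simpa only [he.map_zero, zero_add] using he.map_succ_le 0
  · have hlt : e x < e (x + 1) := he.strictMono x.lt_succ_self
    have hle := he.map_succ_le x
    rw [abs_le]
    omega

theorem collapse_lt_collapse (he : IsStretch C e) {x y : ℕ} (hx : 1 ≤ x) (hxy : x + C < y) :
    collapse e x < collapse e y := by
  obtain ⟨k, hk⟩ := Nat.exists_eq_add_of_le' (he.collapse_pos hx)
  rw [(gc_collapse he.strictMono).lt_iff_lt, hk]
  calc e (k + 1) ≤ e k + C := he.map_succ_le k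
    _ < x + C := Nat.add_lt_add_right ((collapse_eq_succ_iff he.strictMono).1 hk).1 C
    _ < y := hxy

theorem isQI_collapse (he : IsStretch C e) (α : ℕ → Γ) :
    IsQI C (α ∘ collapse e) α (collapse e) := by
  have hmono := (gc_collapse he.strictMono).monotone_l
  have hstep := fun x => collapse_add_le he.strictMono x 1
  refine ⟨he.one_le, fun _ => he.collapse_pos, fun _ _ => rfl, ?_, fun x _ => ?_,
    fun _ _ => he.collapse_lt_collapse⟩
  · have hzero : collapse e 0 = 0 := by
      simpa only [he.map_zero] using collapse_apply he.strictMono 0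
    exact (hstep 0).trans (by simpa only [hzero] using he.one_le)
  · have hle : collapse e x ≤ collapse e (x + 1) := hmono x.le_succ
    have := hstep x
    have := he.one_le
    rw [abs_le]
    omega

theorem mqiEquiv (he : IsStretch C e) (hc : Computable e) (α : ℕ → Γ) :
    MQIequiv (α ∘ collapse e) α :=
  ⟨⟨C, _, he.isQI_collapse α, computable_collapse he.strictMono hc⟩, ⟨C, _, he.isQI α, hc⟩⟩

end IsStretch

theorem PQIred.map {Γ Δ : Type*} {α β : ℕ → Γ} (h : PQIred α β) (p : Γ → Δ) :
    PQIred (p ∘ α) (p ∘ β) := by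
  obtain ⟨C, f, ⟨hC, hpos, hcolor, hqi⟩, hf⟩ := h
  exact ⟨C, f, ⟨hC, hpos, fun x hx => congrArg p (hcolor x hx), hqi⟩, hf⟩

theorem IsQI.apply_le_add {Γ : Type*} {α β : ℕ → Γ} {C : ℕ} {f : ℕ → ℕ} (h : IsQI C α β f)
    (hsurj : ∀ y, 1 ≤ y → ∃ x, 1 ≤ x ∧ f x = y) {x : ℕ} (hx : 1 ≤ x) : f x ≤ x + C := by
  obtain ⟨-, -, -, -, -, hlt⟩ := h
  have hsub : Icc 1 (f x) ⊆ (Icc 1 (x + C)).image f := by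
    intro y hy
    obtain ⟨hy, hyx⟩ := mem_Icc.1 hy
    obtain ⟨z, hz, rfl⟩ := hsurj y hy
    have hzx : z ≤ x + C := not_lt.1 fun hxz => (hlt x z hx hxz).not_ge hyx
    exact mem_image_of_mem f (mem_Icc.2 ⟨hz, hzx⟩)
  simpa using (card_le_card hsub).trans card_image_le

/-- A string is stretch-invariant if it pqi-reduces to each of its computable stretchings. -/
def StretchInvariant {Γ : Type*} (α : ℕ → Γ) : Prop :=
  ∀ C e, IsStretch C e → Computable e → PQIred α (α ∘ collapse e)

theorem StretchInvariant.map {Γ Δ : Type*} {α : ℕ → Γ} (h : StretchInvariant α) (p : Γ → Δ) :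
    StretchInvariant (p ∘ α) :=
  fun C e he hc => (h C e he hc).map p

section DoubleAllLetters

variable {Γ : Type*} {α : ℕ → Γ}

theorem isStretch_two_mul : IsStretch 2 (2 * ·) :=
  ⟨rfl, strictMono_mul_left_of_pos two_pos, fun _ => le_rfl⟩

theorem computable_two_mul : Computable (2 * · : ℕ → ℕ) :=
  (Primrec.nat_mul.comp (Primrec.const 2) Primrec.id).to_comp

theorem collapse_two_mul_eq_succ (k : ℕ) :
    collapse (2 * ·) (2 * k + 1) = k + 1 ∧ collapse (2 * ·) (2 * k + 2) = k + 1 := by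
  simp only [collapse_eq_succ_iff isStretch_two_mul.strictMono]
  omega

theorem computable_of_self_reducible [Primcodable Γ] {g : ℕ → ℕ} (hg : Computable g) (B : ℕ)
    (hlt : ∀ x, B ≤ x → g x < x) (hα : ∀ x, B ≤ x → α (g x) = α x) : Computable α := by
  let step (l : List Γ) : Option Γ :=
    bif decide (l.length < B) then ((List.range B).map α)[l.length]? else l[g l.length]?
  have hstep : Computable step :=
    Computable.cond
      ((Primrec.nat_lt.decide.comp Primrec.list_length (Primrec.const B)).to_comp)
      (Computable.list_getElem?.comp (Computable.const _) Computable.list_length)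
      (Computable.list_getElem?.comp Computable.id (hg.comp Computable.list_length))
  have hspec (x : ℕ) : step ((List.range x).map α) = some (α x) := by
    rcases lt_or_ge x B with hx | hx
    · simp [step, hx]
    · simp [step, hx.not_gt, hlt x hx, hα x hx]
  exact (Computable.nat_strong_rec (fun _ : Unit => α) (hstep.comp Computable.snd).to₂
    fun _ => hspec).comp (Computable.const ()) Computable.id

theorem computable_of_pqiRed_double [Primcodable Γ] (h : PQIred α (α ∘ collapse (2 * ·))) :
    Computable α := by
  obtain ⟨C, f, hf, hcomp, -, hsurj⟩ := h
  have ⟨_, _, hcolor, _⟩ := hf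
  have hgc := gc_collapse isStretch_two_mul.strictMono
  refine computable_of_self_reducible
    ((computable_collapse isStretch_two_mul.strictMono computable_two_mul).comp hcomp) (C + 2)
    (fun x hx => ?_) fun x hx => ?_
  · have hfx : f x ≤ x + C := hf.apply_le_add hsurj (by omega)
    have hle : collapse (2 * ·) (f x) ≤ x - 1 := hgc.l_le (by omega)
    omega
  · exact hcolor x (by omega)

theorem infinite_setOf_eq_of_pqiRed_double (h : PQIred α (α ∘ collapse (2 * ·))) {m : ℕ}
    (hm : 1 ≤ m) : {x | 1 ≤ x ∧ α x = α m}.Infinite := by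
  obtain ⟨-, f, ⟨-, hpos, hcolor, -⟩, -, -, hsurj⟩ := h
  set s : Set ℕ := {x | 1 ≤ x ∧ α x = α m}
  set g : ℕ → ℕ := fun x => collapse (2 * ·) (f x)
  have hmaps : Set.MapsTo g s s := fun x ⟨hx, hxm⟩ =>
    ⟨isStretch_two_mul.collapse_pos (hpos x hx), (hcolor x hx).trans hxm⟩
  have hpre {y z : ℕ} (hz : z ∈ s) (hy : 1 ≤ y) (hyz : collapse (2 * ·) y = z) :
      ∃ x ∈ s, f x = y ∧ g x = z := by
    obtain ⟨x, hx, rfl⟩ := hsurj y hy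
    exact ⟨x, ⟨hx, (hcolor x hx).symm.trans ((congrArg α hyz).trans hz.2)⟩, rfl, hyz⟩
  have hsurjOn : Set.SurjOn g s s := fun z hz => by
    obtain ⟨x, hx, -, hgx⟩ := hpre hz (by linarith [hz.1])
      (collapse_apply isStretch_two_mul.strictMono z)
    exact ⟨x, hx, hgx⟩
  intro hfin
  have hinj : Set.InjOn g s := ((hfin.surjOn_iff_bijOn_of_mapsTo hmaps).1 hsurjOn).injOn
  obtain ⟨k, rfl⟩ := Nat.exists_eq_add_of_le' hm
  obtain ⟨x, hx, hfx, hgx⟩ := hpre ⟨hm, rfl⟩ (by omega) (collapse_two_mul_eq_succ k).1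
  obtain ⟨y, hy, hfy, hgy⟩ := hpre ⟨hm, rfl⟩ (by omega) (collapse_two_mul_eq_succ k).2
  have hxy : x = y := hinj hx hy (hgx.trans hgy.symm)
  rw [hxy] at hfx
  omega

end DoubleAllLetters

section DoubleLetter

variable {Γ : Type*} [DecidableEq Γ] {α : ℕ → Γ} {b c : Γ}

/-- The number of occurrences of the letter `c` among the first `n` letters of `α`. -/
def letterCount (α : ℕ → Γ) (c : Γ) (n : ℕ) : ℕ := #{x ∈ Icc 1 n | α x = c}

theorem letterCount_succ (n : ℕ) :
    letterCount α c (n + 1) = letterCount α c n + if α (n + 1) = c then 1 else 0 := by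
  rw [letterCount, ← insert_Icc_right_eq_Icc_add_one (by omega), filter_insert]
  split_ifs
  · exact card_insert_of_notMem (by simp)
  · rfl

theorem letterCount_mono : Monotone (letterCount α c) := fun _ _ h =>
  card_le_card (filter_subset_filter _ (Icc_subset_Icc_right h))

theorem letterCount_add_le (n k : ℕ) : letterCount α c (n + k) ≤ letterCount α c n + k := by
  induction k with
  | zero => rfl
  | succ k ih =>
    rw [← add_assoc, letterCount_succ]
    split_ifs <;> omega

theorem tendsto_letterCount (h : {x | 1 ≤ x ∧ α x = c}.Infinite) :
    Tendsto (letterCount α c) atTop atTop := by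
  refine tendsto_atTop_atTop_of_monotone letterCount_mono fun k => ?_
  obtain ⟨t, ht, rfl⟩ := h.exists_subset_card_eq k
  refine ⟨t.sup id, card_le_card fun x hx => ?_⟩
  exact mem_filter.2 ⟨mem_Icc.2 ⟨(ht hx).1, le_sup (f := id) hx⟩, (ht hx).2⟩

theorem computable_letterCount [Primcodable Γ] (hα : Computable α) (c : Γ) :
    Computable (letterCount α c) := by
  have hletter : Computable fun n => decide (α (n + 1) = c) :=
    Primrec.eq.decide.to_comp.comp (hα.comp Computable.succ) (Computable.const c)
  have hstep : Computable₂ fun (_ : ℕ) (s : ℕ × ℕ) =>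
      s.2 + bif decide (α (s.1 + 1) = c) then 1 else 0 :=
    Primrec.nat_add.to_comp.comp (Computable.snd.comp Computable.snd)
      (Computable.cond (hletter.comp (Computable.fst.comp Computable.snd))
        (Computable.const 1) (Computable.const 0))
  refine (Computable.nat_rec Computable.id (Computable.const 0) hstep).of_eq fun n => ?_
  induction n with
  | zero => rfl
  | succ n ih => simpa [letterCount_succ, Bool.cond_decide] using ih

/-- The stretching that doubles the occurrences of the letter `b` in `α`. -/
def doubleLetter (α : ℕ → Γ) (b : Γ) (n : ℕ) : ℕ := n + letterCount α b n

theorem doubleLetter_succ (n : ℕ) :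
    doubleLetter α b (n + 1) = doubleLetter α b n + if α (n + 1) = b then 2 else 1 := by
  simp only [doubleLetter, letterCount_succ]
  split_ifs <;> omega

theorem isStretch_doubleLetter (α : ℕ → Γ) (b : Γ) : IsStretch 2 (doubleLetter α b) where
  map_zero := rfl
  strictMono := strictMono_id.add_monotone letterCount_mono
  map_succ_le n := by
    rw [doubleLetter_succ]
    split_ifs <;> omega

theorem computable_doubleLetter [Primcodable Γ] (hα : Computable α) (b : Γ) :
    Computable (doubleLetter α b) :=
  Primrec.nat_add.to_comp.comp Computable.id (computable_letterCount hα b)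

theorem doubleLetter_collapse {y : ℕ} (hy : 1 ≤ y) (hb : α (collapse (doubleLetter α b) y) ≠ b) :
    doubleLetter α b (collapse (doubleLetter α b) y) = y := by
  have he := isStretch_doubleLetter α b
  obtain ⟨k, hk⟩ := Nat.exists_eq_add_of_le' (he.collapse_pos hy)
  obtain ⟨hlt, hle⟩ := (collapse_eq_succ_iff he.strictMono).1 hk
  rw [hk] at hb ⊢
  rw [doubleLetter_succ, if_neg hb] at hle ⊢
  omega

theorem exists_letterCount_doubleLetter_le_add (h : PQIred α (α ∘ collapse (doubleLetter α b)))
    (hcb : c ≠ b) :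
    ∃ C, ∀ n, letterCount α c (doubleLetter α b n) ≤ letterCount α c n + C := by
  obtain ⟨C, f, hf, -, hinj, hsurj⟩ := h
  have he := isStretch_doubleLetter α b
  have ⟨_, hpos, hcolor, _⟩ := hf
  refine ⟨C, fun n => le_trans ?_ (letterCount_add_le n C)⟩
  refine card_le_card_of_injOn (fun x => collapse (doubleLetter α b) (f x)) (fun x hx => ?_)
    fun x hx y hy hxy => ?_
  · obtain ⟨hx, hxc⟩ := mem_filter.1 hx
    obtain ⟨hx, hxn⟩ := mem_Icc.1 hx
    have hle : collapse (doubleLetter α b) (f x) ≤ n + C := calc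
      collapse (doubleLetter α b) (f x) ≤ collapse (doubleLetter α b) (doubleLetter α b n + C) :=
        (gc_collapse he.strictMono).monotone_l
          ((hf.apply_le_add hsurj hx).trans (Nat.add_le_add_right hxn C))
      _ ≤ n + C := (collapse_add_le he.strictMono _ C).trans_eq
        (by rw [collapse_apply he.strictMono])
    exact mem_filter.2 ⟨mem_Icc.2 ⟨he.collapse_pos (hpos x hx), hle⟩, (hcolor x hx).trans hxc⟩
  · have hfix {z : ℕ} (hz : z ∈ {x ∈ Icc 1 (doubleLetter α b n) | α x = c}) :
        1 ≤ z ∧ doubleLetter α b (collapse (doubleLetter α b) (f z)) = f z := by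
      obtain ⟨hz, hzc⟩ := mem_filter.1 hz
      have hz1 := (mem_Icc.1 hz).1
      have hcol : α (collapse (doubleLetter α b) (f z)) = c := (hcolor z hz1).trans hzc
      exact ⟨hz1, doubleLetter_collapse (hpos z hz1) (hcol ▸ hcb)⟩
    obtain ⟨hx1, hx⟩ := hfix hx
    obtain ⟨hy1, hy⟩ := hfix hy
    exact hinj x y hx1 hy1 (hx.symm.trans ((congrArg (doubleLetter α b) hxy).trans hy))

end DoubleLetter

theorem letterCount_true_add_letterCount_false (a : ℕ → Bool) (n : ℕ) :
    letterCount a true n + letterCount a false n = n := by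
  simpa [letterCount] using card_filter_add_card_filter_not (s := Icc 1 n) (a · = true)

theorem StretchInvariant.eq_of_bool {a : ℕ → Bool} (h : StretchInvariant a) {x y : ℕ} (hx : 1 ≤ x)
    (hy : 1 ≤ y) : a x = a y := by
  by_contra hxy
  have hdouble := h 2 _ isStretch_two_mul computable_two_mul
  have hcomp : Computable a := computable_of_pqiRed_double hdouble
  have hinf (b : Bool) : {z | 1 ≤ z ∧ a z = b}.Infinite := by
    obtain ⟨m, hm, rfl⟩ : ∃ m, 1 ≤ m ∧ a m = b := by
      by_cases hxb : a x = b
      · exact ⟨x, hx, hxb⟩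
      · exact ⟨y, hy, by cases b <;> simp_all⟩
    exact infinite_setOf_eq_of_pqiRed_double hdouble hm
  have hsingle (b : Bool) :=
    h 2 _ (isStretch_doubleLetter a b) (computable_doubleLetter hcomp b)
  obtain ⟨C, hC⟩ := exists_letterCount_doubleLetter_le_add (hsingle true) Bool.false_ne_true
  obtain ⟨D, hD⟩ := exists_letterCount_doubleLetter_le_add (hsingle false) Bool.false_ne_true.symm
  obtain ⟨n, htrue, hfalse⟩ :=
    (((tendsto_letterCount (hinf true)).eventually_ge_atTop (C + D + 1)).and
      ((tendsto_letterCount (hinf false)).eventually_ge_atTop (C + D + 1))).exists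
  have hfew_false : letterCount a false (n + (C + D + 1)) ≤ letterCount a false n + C :=
    (letterCount_mono (Nat.add_le_add_left htrue n)).trans (hC n)
  have hfew_true : letterCount a true (n + (C + D + 1)) ≤ letterCount a true n + D :=
    (letterCount_mono (Nat.add_le_add_left hfalse n)).trans (hD n)
  have := letterCount_true_add_letterCount_false a n
  have := letterCount_true_add_letterCount_false a (n + (C + D + 1))
  omega

theorem coinciding_degrees_trivial_general {Γ : Type*} (α : ℕ → Γ)
    (h : {β : ℕ → Γ | MQIequiv β α} ⊆ {β : ℕ → Γ | PQIequiv β α}) :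
    ∃ a : Γ, ∀ x, 1 ≤ x → α x = a := by
  classical
  have hα : StretchInvariant α := fun _ _ he hc => (h (he.mqiEquiv hc α)).2
  refine ⟨α 1, fun x hx => ?_⟩
  simpa using (hα.map fun c => decide (c = α 1)).eq_of_bool hx le_rfl

/-- If `α` is a computable string over a finite alphabet whose
pqi-, 1qi- and mqi-degrees coincide as sets of strings, then `α` is a constant
string `a^ω`; in particular all three degrees are trivial. -/
theorem coinciding_degrees_trivial {Γ : Type*} [Fintype Γ] [Primcodable Γ]
    (α : ℕ → Γ) (hα : Computable α)
    (h1 : {β : ℕ → Γ | PQIequiv β α} = {β : ℕ → Γ | OQIequiv β α})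
    (h2 : {β : ℕ → Γ | OQIequiv β α} = {β : ℕ → Γ | MQIequiv β α}) :
    ∃ a : Γ, ∀ x, 1 ≤ x → α x = a :=
  coinciding_degrees_trivial_general α (h1.trans h2).ge
end

section
/- Let α be an infinite string over a finite alphabet in which at least two distinct letters occur. Then the pqi-degree [α]_pqi = {β : β ≡_pqi α} is an infinite set; that is, all non-trivial pqi-degrees are infinite. -/
/-!
A computable permutation of the positions that moves every position by a bounded amount is a
bijective quasi-isometry, so rearranging a string by it stays within the pqi-degree. Transpositions
`(p n)` are of this kind. If two letters occur, one of them, say the letter at position `p`, differs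
from the letter at infinitely many positions `n`; for these `n`, swapping positions `p` and `n`
gives pairwise distinct strings.
-/

theorem IsQI.of_displacement_le {Γ : Type*} {α β : ℕ → Γ} {f : ℕ → ℕ} {D : ℕ}
    (hpos : ∀ x, 1 ≤ x → 1 ≤ f x) (hcolor : ∀ x, 1 ≤ x → β (f x) = α x)
    (hD : ∀ x, 1 ≤ x → |(f x : ℤ) - x| ≤ D) : IsQI (2 * D + 1) α β f := by
  have hbound : ∀ x, 1 ≤ x → f x ≤ x + D ∧ x ≤ f x + D := fun x hx => by grind
  refine ⟨by lia, hpos, hcolor, ?_, fun x hx => ?_, fun x y hx hxy => ?_⟩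
  · have := hbound 1 le_rfl
    lia
  · have := hbound x hx
    have := hbound (x + 1) (by lia)
    rw [abs_le]
    lia
  · have := hbound x hx
    have := hbound y (by lia)
    lia

theorem PQIred.comp_perm {Γ : Type*} (β : ℕ → Γ) {σ : Equiv.Perm ℕ} {D : ℕ}
    (hσ : Computable σ) (h0 : σ 0 = 0) (hD : ∀ x, |(σ x : ℤ) - x| ≤ D) :
    PQIred (β ∘ σ) β := by
  have hpos : ∀ x, 1 ≤ σ x ↔ 1 ≤ x := fun x => by
    rw [Nat.one_le_iff_ne_zero, Nat.one_le_iff_ne_zero, ← h0, σ.injective.ne_iff, h0]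
  refine ⟨2 * D + 1, σ, .of_displacement_le (fun x => (hpos x).2) (fun _ _ => rfl) fun x _ => hD x,
    hσ, fun _ _ _ _ hxy => σ.injective hxy, fun y hy => ⟨σ.symm y, ?_, σ.apply_symm_apply y⟩⟩
  rwa [← hpos, σ.apply_symm_apply]

theorem PQIequiv.comp_perm {Γ : Type*} (α : ℕ → Γ) {σ : Equiv.Perm ℕ} {D : ℕ}
    (hσ : σ.Computable) (h0 : σ 0 = 0) (hD : ∀ x, |(σ x : ℤ) - x| ≤ D) :
    PQIequiv (α ∘ σ) α := by
  have h0' : σ.symm 0 = 0 := σ.symm_apply_eq.2 h0.symm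
  have hD' : ∀ x, |(σ.symm x : ℤ) - x| ≤ D := fun x => by
    simpa only [σ.apply_symm_apply, abs_sub_comm] using hD (σ.symm x)
  have hinv : PQIred ((α ∘ σ) ∘ σ.symm) (α ∘ σ) := .comp_perm (α ∘ σ) hσ.2 h0' hD'
  rw [Function.comp_assoc, σ.self_comp_symm, Function.comp_id] at hinv
  exact ⟨.comp_perm α hσ.1 h0 hD, hinv⟩

theorem primrec_swap {X : Type*} [Primcodable X] [DecidableEq X] (a b : X) :
    Primrec (Equiv.swap a b) :=
  (Primrec.ite (Primrec.eq.comp .id (.const a)) (.const b)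
    (Primrec.ite (Primrec.eq.comp .id (.const b)) (.const a) .id)).of_eq
    fun x => (Equiv.swap_apply_def a b x).symm

theorem abs_swap_sub_le (p n x : ℕ) :
    |(Equiv.swap p n x : ℤ) - x| ≤ ((p : ℤ) - n).natAbs := by
  rw [Equiv.swap_apply_def]
  grind

theorem PQIequiv.comp_swap {Γ : Type*} (α : ℕ → Γ) {p n : ℕ} (hp : p ≠ 0) (hn : n ≠ 0) :
    PQIequiv (α ∘ Equiv.swap p n) α :=
  .comp_perm α ⟨(primrec_swap p n).to_comp, (primrec_swap p n).to_comp⟩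
    (Equiv.swap_apply_of_ne_of_ne hp.symm hn.symm) (abs_swap_sub_le p n)

theorem injOn_comp_swap {X Γ : Type*} [DecidableEq X] (α : X → Γ) (p : X) :
    Set.InjOn (fun n => α ∘ Equiv.swap p n) {n | α n ≠ α p} := by
  intro n hn m _ hnm
  by_contra hne
  have hnp : n ≠ p := ne_of_apply_ne α hn
  have hletter : α (Equiv.swap p n n) = α (Equiv.swap p m n) := congrFun hnm n
  rw [Equiv.swap_apply_right, Equiv.swap_apply_of_ne_of_ne hnp hne] at hletter
  exact hn hletter.symm

theorem infinite_setOf_ne_or_infinite_setOf_ne {X Γ : Type*} [Infinite X] (α : X → Γ) {a b : Γ}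
    (hab : a ≠ b) : {n | α n ≠ a}.Infinite ∨ {n | α n ≠ b}.Infinite := by
  have hcover : {n | α n ≠ a} ∪ {n | α n ≠ b} = Set.univ :=
    Set.eq_univ_of_forall fun n => (hab.ne_or_ne (α n)).imp Ne.symm Ne.symm
  rw [← Set.infinite_union, hcover]
  exact Set.infinite_univ

/-- Index `0` is not a position of the string, so it is pinned down here: over an infinite alphabet,
changing the junk value `β 0` would already give infinitely many functions `β`. -/
theorem nontrivial_pqi_degree_infinite_general {Γ : Type*} (α : ℕ → Γ)
    (h : ∃ x y, 1 ≤ x ∧ 1 ≤ y ∧ α x ≠ α y) :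
    {β : ℕ → Γ | PQIequiv β α ∧ β 0 = α 0}.Infinite := by
  obtain ⟨p, hp, hinf⟩ : ∃ p, p ≠ 0 ∧ {n | α n ≠ α p}.Infinite := by
    obtain ⟨x, y, hx, hy, hxy⟩ := h
    rcases infinite_setOf_ne_or_infinite_setOf_ne α hxy with hinf | hinf
    · exact ⟨x, by lia, hinf⟩
    · exact ⟨y, by lia, hinf⟩
  refine Set.infinite_of_injOn_mapsTo ((injOn_comp_swap α p).mono Set.sdiff_subset) ?_
    (hinf.sdiff (Set.finite_singleton 0))
  rintro n ⟨-, hn⟩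
  exact ⟨.comp_swap α hp hn, congrArg α (Equiv.swap_apply_of_ne_of_ne hp.symm (Ne.symm hn))⟩

/-- If at least two distinct letters occur in `α`, then the
pqi-degree of `α` is an infinite set: all non-trivial pqi-degrees are infinite. -/
theorem nontrivial_pqi_degree_infinite {Γ : Type*} [Fintype Γ] (α : ℕ → Γ)
    (h : ∃ x y, 1 ≤ x ∧ 1 ≤ y ∧ α x ≠ α y) :
    {β : ℕ → Γ | PQIequiv β α}.Infinite := by
  exact (nontrivial_pqi_degree_infinite_general α h).mono fun _ hβ => hβ.1
end

section
/- There exist two pairs (α, β) and (γ, δ) of computable infinite strings over {0,1} such that α ≤_mqi γ, α ≤_mqi δ, β ≤_mqi γ and β ≤_mqi δ, but there is no infinite string ξ with α ≤_mqi ξ, β ≤_mqi ξ, ξ ≤_mqi γ and ξ ≤_mqi δ. (Witnesses: α = σ_1σ_2⋯ with σ_i = (01)^{2^{2^i}} 0^i 1^i, β = τ_1τ_2⋯ with τ_i = (01)^{2^{2^i}} 1^i 0^i, γ = μ_1μ_2⋯ with μ_i = (01)^{2^{2^i}} 0^i, and δ = ν_1ν_2⋯ with ν_i = (01)^{2^{2^i}}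 1^i.) Hence the partial order of mqi-degrees is not dense with respect to pairs of mqi-degrees. -/
/-!
The lower strings `α`, `β` carry at each position `2 ^ 2 ^ i` a block consisting of two opposite
runs of length `2 * i`, and the upper strings `γ`, `δ` carry a single run at the same place; away
from the blocks all of them alternate. A quasi-isometry may collapse a run onto an alternating
stretch, so sending either half of a block onto the run of an upper string gives the four
reductions.

Suppose that `ξ` lies in between. A long run of `γ` or `δ` pulls back to a long run of `ξ`, and
from there to `α` and `β`. The blocks are so sparse that a quasi-isometry cannot change the index
of a block, so for large `j` the pullbacks of both letters lie in the `j`-th block. Since `α` and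
`β` order the letters of that block oppositely, neither of the two runs of `ξ` can come
much before the other; they must therefore overlap, although their letters differ.
-/

theorem primrec₂_nat_pow : Primrec₂ ((· ^ ·) : ℕ → ℕ → ℕ) :=
  Primrec₂.unpaired'.1 Nat.Primrec.pow

theorem primrec_nat_log {b : ℕ} (hb : 1 < b) : Primrec (Nat.log b) := by
  have hpow : PrimrecRel fun n k : ℕ => b ^ k ≤ n :=
    Primrec.nat_le.comp (primrec₂_nat_pow.comp (Primrec.const b) Primrec.snd) Primrec.fst
  refine (Primrec.nat_findGreatest Primrec.id hpow).of_eq fun n => ?_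
  rcases Nat.eq_zero_or_pos n with rfl | hn
  · simp
  · refine Nat.findGreatest_eq_iff.2
      ⟨Nat.log_le_self b n, fun _ => Nat.pow_log_le_self b hn.ne', ?_⟩
    exact fun k hk _ hle => hk.not_ge (Nat.le_log_of_pow_le hb hle)

theorem primrec₂_nat_bit : Primrec₂ Nat.bit :=
  Primrec.cond Primrec.fst (Primrec.nat_double_succ.comp Primrec.snd)
    (Primrec.nat_double.comp Primrec.snd) |>.of_eq fun ⟨b, _⟩ => by cases b <;> rfl

theorem nat_bit_div2_lt_iff {b : Bool} {m n : ℕ} (hm : Even m) :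
    Nat.bit b n.div2 < m ↔ n < m := by
  obtain ⟨k, rfl⟩ := hm
  have := b.toNat_le
  rw [Nat.bit_val, Nat.div2_val]
  omega

theorem nat_log_add_one_le (b n : ℕ) : Nat.log b (n + 1) ≤ Nat.log b n + 1 := by
  rcases Nat.lt_or_ge 1 b with hb | hb
  · refine Nat.le_of_lt_succ (Nat.log_lt_of_lt_pow n.succ_ne_zero ?_)
    calc n + 1 ≤ b ^ (Nat.log b n + 1) := Nat.lt_pow_succ_log_self hb n
      _ < b ^ (Nat.log b n + 1 + 1) := Nat.pow_lt_pow_succ hb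
  · simp [Nat.log_of_left_le_one hb]

/-- `ConstNear σ a x r` says that `σ` takes the value `a` at all positions at distance at most `r`
from `x`. Index `0`, which is not a position, is excluded. -/
def ConstNear {Γ : Type*} (σ : ℕ → Γ) (a : Γ) (x r : ℕ) : Prop :=
  ∀ t, 1 ≤ t → x ≤ t + r → t ≤ x + r → σ t = a

theorem ConstNear.of_le {Γ : Type*} {σ : ℕ → Γ} {a : Γ} {x y r s : ℕ} (h : ConstNear σ a x r)
    (hxy : x + s ≤ y + r) (hyx : y + s ≤ x + r) : ConstNear σ a y s :=
  fun t ht h₁ h₂ => h t ht (by omega) (by omega)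

/-- `WithinFactor K x y` says that `x` and `y` agree up to the factor `K`; it measures how far a
quasi-isometry can move a position. -/
def WithinFactor (K x y : ℕ) : Prop := x ≤ K * y ∧ y ≤ K * x

theorem WithinFactor.trans {K L x y z : ℕ} (hxy : WithinFactor K x y) (hyz : WithinFactor L y z) :
    WithinFactor (K * L) x z := by
  refine ⟨?_, ?_⟩
  · calc x ≤ K * (L * z) := hxy.1.trans (Nat.mul_le_mul_left K hyz.1)
      _ = K * L * z := by ring
  · calc z ≤ L * (K * x) := hyz.2.trans (Nat.mul_le_mul_left L hxy.2)
      _ = K * L * x := by ring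

namespace IsQI

variable {Γ : Type*} {σ τ : ℕ → Γ} {f : ℕ → ℕ} {C D : ℕ}

theorem one_le_apply (hf : IsQI C σ τ f) {x : ℕ} (hx : 1 ≤ x) : 1 ≤ f x := hf.2.1 x hx

theorem color_apply (hf : IsQI C σ τ f) {x : ℕ} (hx : 1 ≤ x) : τ (f x) = σ x := hf.2.2.1 x hx

theorem apply_one_le (hf : IsQI C σ τ f) : f 1 ≤ C := hf.2.2.2.1

theorem apply_lt_apply (hf : IsQI C σ τ f) {x y : ℕ} (hx : 1 ≤ x) (hxy : x + C < y) : f x < f y :=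
  hf.2.2.2.2.2 x y hx hxy

theorem mono (hf : IsQI C σ τ f) (h : C ≤ D) : IsQI D σ τ f := by
  obtain ⟨hC, hpos, hcol, hone, hstep, hlt⟩ := hf
  exact ⟨hC.trans h, hpos, hcol, hone.trans h,
    fun x hx => (hstep x hx).trans (by exact_mod_cast h),
    fun x y hx hxy => hlt x y hx (by omega)⟩

theorem iff_of_injective {Δ : Type*} {σ' τ' : ℕ → Δ} {ι : Δ → Γ} (hι : Function.Injective ι)
    (hσ : ∀ x, 1 ≤ x → σ x = ι (σ' x)) (hτ : ∀ x, 1 ≤ x → τ x = ι (τ' x)) :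
    IsQI C σ τ f ↔ IsQI C σ' τ' f := by
  refine and_congr_right fun _ => and_congr_right fun hpos => and_congr_left fun _ =>
    forall₂_congr fun x hx => ?_
  rw [hσ x hx, hτ (f x) (hpos x hx), hι.eq_iff]

theorem of_near {s : ℕ → ℕ} (hpos : ∀ x, 1 ≤ x → 1 ≤ f x) (hcol : ∀ x, 1 ≤ x → τ (f x) = σ x)
    (hs : Monotone s) (hsD : ∀ x, s (x + 1) ≤ s x + D)
    (hle : ∀ x, f x ≤ x + s x + 1) (hge : ∀ x, x + s x ≤ f x + 1) :
    IsQI (s 1 + D + 3) σ τ f := by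
  refine ⟨by omega, hpos, hcol, ?_, fun x _ => ?_, fun x y _ hxy => ?_⟩
  · have := hle 1
    omega
  · have := hle x
    have := hge x
    have := hle (x + 1)
    have := hge (x + 1)
    have := hsD x
    have := hs (Nat.le_add_right x 1)
    rw [abs_le]
    omega
  · have := hle x
    have := hge y
    have := hs (show x ≤ y by omega)
    omega

theorem apply_add_le (hf : IsQI C σ τ f) {x : ℕ} (hx : 1 ≤ x) (k : ℕ) :
    f (x + k) ≤ f x + C * k ∧ f x ≤ f (x + k) + C * k := by
  obtain ⟨-, -, -, -, hstep, -⟩ := hf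
  induction k with
  | zero => simp
  | succ k ih =>
    have := abs_le.1 (hstep (x + k) (by omega))
    rw [← add_assoc, Nat.mul_succ]
    omega

theorem apply_le_mul (hf : IsQI C σ τ f) {x : ℕ} (hx : 1 ≤ x) : f x ≤ C * x := by
  obtain ⟨k, rfl⟩ := Nat.exists_eq_add_of_le hx
  calc f (1 + k) ≤ f 1 + C * k := (hf.apply_add_le le_rfl k).1
    _ ≤ C + C * k := Nat.add_le_add_right hf.apply_one_le _
    _ = C * (1 + k) := by ring

theorem le_mul_apply (hf : IsQI C σ τ f) {x : ℕ} (hx : 1 ≤ x) : x ≤ (C + 1) * f x := by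
  induction x using Nat.strong_induction_on with
  | _ x ih =>
    rcases Nat.lt_or_ge (C + 1) x with hCx | hxC
    · obtain ⟨y, rfl⟩ := Nat.exists_eq_add_of_le' hCx.le
      have hlt : f y < f (y + (C + 1)) := hf.apply_lt_apply (by omega) (by omega)
      calc y + (C + 1) ≤ (C + 1) * f y + (C + 1) :=
            Nat.add_le_add_right (ih y (by omega) (by omega)) _
        _ = (C + 1) * (f y + 1) := by ring
        _ ≤ (C + 1) * f (y + (C + 1)) := Nat.mul_le_mul_left _ hlt
    · exact hxC.trans (Nat.le_mul_of_pos_right _ (hf.one_le_apply hx))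

theorem exists_apply_mem_Icc (hf : IsQI C σ τ f) (m : ℕ) :
    ∃ x, 1 ≤ x ∧ f x ∈ Set.Icc m (m + C) := by
  classical
  have hex : ∃ k, m ≤ f (k + 1) := by
    refine ⟨(C + 1) * m, Nat.le_of_lt (Nat.lt_of_mul_lt_mul_left (a := C + 1) ?_)⟩
    exact Nat.lt_of_lt_of_le (Nat.lt_succ_self _) (hf.le_mul_apply (by omega))
  refine ⟨Nat.find hex + 1, by omega, Nat.find_spec hex, ?_⟩
  rcases h : Nat.find hex with _ | k
  · exact hf.apply_one_le.trans (Nat.le_add_left _ _)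
  · have hbefore : f (k + 1) < m := not_le.1 (Nat.find_min hex (by omega))
    have := (hf.apply_add_le (x := k + 1) (by omega) 1).1
    omega

theorem constNear_of_apply (hf : IsQI C σ τ f) {a : Γ} {x r : ℕ} (hx : 1 ≤ x)
    (h : ConstNear τ a (f x) (C * r)) : ConstNear σ a x r := by
  intro t ht hxt htx
  rw [← hf.color_apply ht]
  rcases le_total x t with hle | hle
  · obtain ⟨d, rfl⟩ := Nat.exists_eq_add_of_le hle
    have := hf.apply_add_le hx d
    have : C * d ≤ C * r := Nat.mul_le_mul_left _ (by omega)
    exact h _ (hf.one_le_apply ht) (by omega) (by omega)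
  · obtain ⟨d, rfl⟩ := Nat.exists_eq_add_of_le hle
    have := hf.apply_add_le ht d
    have : C * d ≤ C * r := Nat.mul_le_mul_left _ (by omega)
    exact h _ (hf.one_le_apply ht) (by omega) (by omega)

theorem exists_constNear (hf : IsQI C σ τ f) {a : Γ} {m r : ℕ} (hm : 1 ≤ m)
    (h : ConstNear τ a m (C * r + C)) :
    ∃ x, 1 ≤ x ∧ f x ∈ Set.Icc m (m + C) ∧ ConstNear σ a x r ∧
      WithinFactor ((C + 1) ^ 2) x m := by
  obtain ⟨x, hx, hmx, hxm⟩ := hf.exists_apply_mem_Icc m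
  refine ⟨x, hx, ⟨hmx, hxm⟩, hf.constNear_of_apply hx (h.of_le (by omega) (by omega)), ?_, ?_⟩
  · calc x ≤ (C + 1) * f x := hf.le_mul_apply hx
      _ ≤ (C + 1) * ((C + 1) * m) := Nat.mul_le_mul_left _ (by nlinarith)
      _ = (C + 1) ^ 2 * m := by ring
  · calc m ≤ C * x := hmx.trans (hf.apply_le_mul hx)
      _ ≤ (C + 1) ^ 2 * x := Nat.mul_le_mul_right _ (by nlinarith)

end IsQI

theorem MQIred.qired {Γ : Type*} {σ τ : ℕ → Γ} : MQIred σ τ → QIred σ τ :=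
  fun ⟨C, f, hf, _⟩ => ⟨C, f, hf⟩

theorem MQIred.comp_left {Γ Δ : Type*} {σ τ : ℕ → Δ} {ι : Δ → Γ} (hι : Function.Injective ι)
    (h : MQIred σ τ) : MQIred (ι ∘ σ) (ι ∘ τ) :=
  let ⟨C, f, hf, hcomp⟩ := h
  ⟨C, f, (IsQI.iff_of_injective hι (fun _ _ => rfl) fun _ _ => rfl).2 hf, hcomp⟩

theorem QIred.iff_of_injective {Γ Δ : Type*} {σ τ : ℕ → Γ} {σ' τ' : ℕ → Δ} {ι : Δ → Γ}
    (hι : Function.Injective ι) (hσ : ∀ x, 1 ≤ x → σ x = ι (σ' x))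
    (hτ : ∀ x, 1 ≤ x → τ x = ι (τ' x)) : QIred σ τ ↔ QIred σ' τ' :=
  exists₂_congr fun _ _ => IsQI.iff_of_injective hι hσ hτ

/-- The position where the `i`-th block of the witness strings begins. -/
def blockStart (i : ℕ) : ℕ := 2 ^ 2 ^ i

/-- The index of the last block beginning at or before `x`; it is `0` for `x < 2`, where no block
has begun, which does no harm because block `0` is empty. -/
def stage (x : ℕ) : ℕ := Nat.log 2 (Nat.log 2 x)

theorem blockStart_succ (i : ℕ) : blockStart (i + 1) = blockStart i * blockStart i := by
  rw [blockStart, pow_succ, pow_mul, sq, blockStart]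

theorem blockStart_strictMono : StrictMono blockStart :=
  (pow_right_strictMono₀ one_lt_two).comp (pow_right_strictMono₀ one_lt_two)

theorem even_blockStart (i : ℕ) : Even (blockStart i) :=
  even_two.pow_of_ne_zero (by positivity)

theorem two_mul_add_two_le_blockStart (i : ℕ) : 2 * i + 2 ≤ blockStart i := by
  induction i with
  | zero => exact le_rfl
  | succ i ih =>
    rw [blockStart_succ]
    nlinarith

theorem blockStart_add_le_blockStart_succ (i : ℕ) :
    blockStart i + 4 * i + 2 ≤ blockStart (i + 1) := by
  have := two_mul_add_two_le_blockStart i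
  rw [blockStart_succ]
  nlinarith

theorem mul_blockStart_lt {L i j : ℕ} (hL : L < j) (hij : i < j) :
    L * blockStart i < blockStart j := by
  obtain ⟨k, rfl⟩ : ∃ k, j = k + 1 := Nat.exists_eq_succ_of_ne_zero (by omega)
  have := two_mul_add_two_le_blockStart k
  calc L * blockStart i ≤ L * blockStart k :=
        Nat.mul_le_mul_left _ (blockStart_strictMono.monotone (by omega))
    _ < blockStart k * blockStart k := Nat.mul_lt_mul_of_pos_right (by omega) (by omega)
    _ = blockStart (k + 1) := (blockStart_succ k).symm

theorem blockStart_stage_le {x : ℕ} (hx : 2 ≤ x) : blockStart (stage x) ≤ x :=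
  calc 2 ^ 2 ^ stage x ≤ 2 ^ Nat.log 2 x :=
        Nat.pow_le_pow_right two_pos (Nat.pow_log_le_self 2 (Nat.log_pos one_lt_two hx).ne')
    _ ≤ x := Nat.pow_log_le_self 2 (by omega)

theorem lt_blockStart_stage_succ (x : ℕ) : x < blockStart (stage x + 1) :=
  calc x < 2 ^ (Nat.log 2 x + 1) := Nat.lt_pow_succ_log_self one_lt_two x
    _ ≤ 2 ^ 2 ^ (stage x + 1) :=
      Nat.pow_le_pow_right two_pos (Nat.lt_pow_succ_log_self one_lt_two _)

theorem stage_eq {x i : ℕ} (hix : blockStart i ≤ x) (hxi : x < blockStart (i + 1)) :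
    stage x = i := by
  have hx : 2 ≤ x := le_trans (by have := two_mul_add_two_le_blockStart i; omega) hix
  have h₁ := blockStart_strictMono.lt_iff_lt.1 (hix.trans_lt (lt_blockStart_stage_succ x))
  have h₂ := blockStart_strictMono.lt_iff_lt.1 ((blockStart_stage_le hx).trans_lt hxi)
  omega

theorem stage_mono : Monotone stage := fun _ _ h => Nat.log_mono_right (Nat.log_mono_right h)

theorem stage_add_one_le (x : ℕ) : stage (x + 1) ≤ stage x + 1 :=
  (Nat.log_mono_right (nat_log_add_one_le 2 x)).trans (nat_log_add_one_le 2 _)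

theorem stage_bit_div2 (b : Bool) (x : ℕ) : stage (Nat.bit b x.div2) = stage x := by
  by_cases hx : x.div2 = 0
  · have : x < 2 := by rw [Nat.div2_val] at hx; omega
    interval_cases x <;> cases b <;> rfl
  · have hlog : Nat.log 2 (Nat.bit b x.div2) = Nat.log 2 (Nat.bit x.bodd x.div2) := by
      rw [Nat.log_two_bit hx, Nat.log_two_bit hx]
    rw [stage, hlog, Nat.bit_bodd_div2, stage]

theorem primrec_blockStart : Primrec blockStart :=
  primrec₂_nat_pow.comp (.const 2) (primrec₂_nat_pow.comp (.const 2) .id)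

theorem primrec_stage : Primrec stage :=
  (primrec_nat_log one_lt_two).comp (primrec_nat_log one_lt_two)

/-- The positions of the first run of each block. Its length is twice the index of the block, so
that runs begin and end at even positions and shifting by a run preserves parity. -/
def LeftHalf (x : ℕ) : Prop :=
  blockStart (stage x) ≤ x ∧ x < blockStart (stage x) + 2 * stage x

/-- The positions of the second run of each block, as long as the first one. -/
def RightHalf (x : ℕ) : Prop :=
  blockStart (stage x) + 2 * stage x ≤ x ∧ x < blockStart (stage x) + 4 * stage x

instance : DecidablePred LeftHalf := fun x => by unfold LeftHalf; infer_instance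

instance : DecidablePred RightHalf := fun x => by unfold RightHalf; infer_instance

theorem LeftHalf.not_rightHalf {x : ℕ} (h : LeftHalf x) : ¬ RightHalf x :=
  fun h' => h'.1.not_gt h.2

theorem rightHalf_of_mem_Ico {i x : ℕ}
    (hx : x ∈ Set.Ico (blockStart i + 2 * i) (blockStart i + 4 * i)) :
    RightHalf x := by
  have := blockStart_add_le_blockStart_succ i
  have hstage : stage x = i := stage_eq (by have := hx.1; omega) (by have := hx.2; omega)
  rwa [RightHalf, hstage]

theorem leftHalf_bit_div2 {b : Bool} {x : ℕ} : LeftHalf (Nat.bit b x.div2) ↔ LeftHalf x := by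
  have hS := even_blockStart (stage x)
  simp only [LeftHalf, stage_bit_div2, ← not_lt, nat_bit_div2_lt_iff hS,
    nat_bit_div2_lt_iff (hS.add (even_two_mul _))]

theorem rightHalf_bit_div2 {b : Bool} {x : ℕ} : RightHalf (Nat.bit b x.div2) ↔ RightHalf x := by
  have hS := even_blockStart (stage x)
  have h4 : Even (4 * stage x) := (by decide : Even 4).mul_right _
  simp only [RightHalf, stage_bit_div2, ← not_lt, nat_bit_div2_lt_iff (hS.add h4),
    nat_bit_div2_lt_iff (hS.add (even_two_mul _))]

theorem leftHalf_of_rightHalf_add {x : ℕ} (h : RightHalf (x + 2 * stage x)) : LeftHalf x := by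
  obtain ⟨hle, hlt⟩ := h
  have hmono : stage x ≤ stage (x + 2 * stage x) := stage_mono (Nat.le_add_right _ _)
  rcases hmono.eq_or_lt with heq | hjump
  · rw [← heq] at hle hlt
    exact ⟨by omega, by omega⟩
  · -- The shifted position has entered the next block by less than the length of a run.
    have hnext : stage x + 1 ≤ stage (x + 2 * stage x) := hjump
    have := blockStart_strictMono.monotone hnext
    have := lt_blockStart_stage_succ x
    omega

theorem primrecPred_leftHalf : PrimrecPred LeftHalf :=
  have hS := primrec_blockStart.comp primrec_stage
  (Primrec.nat_le.comp hS .id).and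
    (Primrec.nat_lt.comp .id (Primrec.nat_add.comp hS (Primrec.nat_double.comp primrec_stage)))

theorem primrecPred_rightHalf : PrimrecPred RightHalf :=
  have hS := primrec_blockStart.comp primrec_stage
  (Primrec.nat_le.comp (Primrec.nat_add.comp hS (Primrec.nat_double.comp primrec_stage)) .id).and
    (Primrec.nat_lt.comp .id
      (Primrec.nat_add.comp hS (Primrec.nat_mul.comp (.const 4) primrec_stage)))

theorem stage_eq_of_withinFactor {K j y : ℕ} (hKj : 5 * K < j) (hy : LeftHalf y ∨ RightHalf y)
    (hyj : WithinFactor K y (blockStart j + 3 * j)) : stage y = j := by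
  obtain ⟨hle, hge⟩ := hyj
  have hyS : blockStart (stage y) ≤ y ∧ y ≤ 5 * blockStart (stage y) := by
    have := two_mul_add_two_le_blockStart (stage y)
    unfold LeftHalf RightHalf at hy
    omega
  have hjS := two_mul_add_two_le_blockStart j
  rcases lt_trichotomy (stage y) j with hlt | heq | hgt
  · have hgap := mul_blockStart_lt hKj hlt
    have : K * y ≤ K * (5 * blockStart (stage y)) := Nat.mul_le_mul_left _ hyS.2
    linarith
  · exact heq
  · have hgap := mul_blockStart_lt (hKj.trans hgt) hgt
    have : K * (blockStart j + 3 * j) ≤ K * (5 * blockStart j) :=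
      Nat.mul_le_mul_left _ (by omega)
    linarith

/-- The strings `α` (for `c = false`) and `β` (for `c = true`) over `Bool`: each block consists of
a run of `c` followed by a run of `!c`, and positions outside the blocks carry their parity. -/
def lowerString (c : Bool) (x : ℕ) : Bool :=
  if LeftHalf x then c else if RightHalf x then !c else x.bodd

/-- The strings `γ` (for `c = false`) and `δ` (for `c = true`) over `Bool`: the second half of each
block is a run of `c`, and all other positions carry their parity. -/
def upperString (c : Bool) (x : ℕ) : Bool :=
  if RightHalf x then c else x.bodd

theorem lowerString_of_leftHalf {c : Bool} {x : ℕ} (h : LeftHalf x) : lowerString c x = c :=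
  if_pos h

theorem lowerString_of_rightHalf {c : Bool} {x : ℕ} (h : RightHalf x) :
    lowerString c x = !c := by
  rw [lowerString, if_neg fun h' => LeftHalf.not_rightHalf h' h, if_pos h]

theorem computable_lowerString (c : Bool) : Computable (lowerString c) :=
  (Primrec.ite primrecPred_leftHalf (.const c)
    (.ite primrecPred_rightHalf (.const !c) .nat_bodd)).to_comp

theorem computable_upperString (c : Bool) : Computable (upperString c) :=
  (Primrec.ite primrecPred_rightHalf (.const c) .nat_bodd).to_comp

/-- The position close to `p` where an upper string has the letter `b`: outside the runs the letters
at `2 * k` and `2 * k + 1` differ, so one of these two serves. -/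
def snap (b : Bool) (p : ℕ) : ℕ := if RightHalf p then p else Nat.bit b p.div2

theorem snap_near (b : Bool) (p : ℕ) : snap b p ≤ p + 1 ∧ p ≤ snap b p + 1 := by
  have := b.toNat_le
  rw [snap, Nat.bit_val, Nat.div2_val]
  split_ifs <;> omega

theorem upperString_snap {b c : Bool} {p : ℕ} (h : RightHalf p → b = c) :
    upperString c (snap b p) = b := by
  by_cases hp : RightHalf p
  · rw [snap, if_pos hp, upperString, if_pos hp, h hp]
  · rw [snap, if_neg hp, upperString, if_neg (mt rightHalf_bit_div2.1 hp), Nat.bodd_bit]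

theorem primrec₂_snap : Primrec₂ snap :=
  Primrec.ite (primrecPred_rightHalf.comp .snd) .snd
    (primrec₂_nat_bit.comp .fst (Primrec.nat_div2.comp .snd))

theorem mqired_upperString {σ : ℕ → Bool} {c : Bool} {s : ℕ → ℕ} {D : ℕ} (hσ : Computable σ)
    (hs : Computable s) (hmono : Monotone s) (hD : ∀ x, s (x + 1) ≤ s x + D) (hone : σ 1 = true)
    (hrun : ∀ x, RightHalf (x + s x) → σ x = c) : MQIred σ (upperString c) := by
  refine ⟨s 1 + D + 3, fun x => snap (σ x) (x + s x), IsQI.of_near (fun x hx => ?_)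
    (fun x _ => upperString_snap (hrun x)) hmono hD (fun x => (snap_near _ _).1)
    (fun x => (snap_near _ _).2), ?_⟩
  · rcases hx.eq_or_lt with rfl | hx
    · rw [hone, snap, Nat.bit_val]
      split_ifs <;> simp
    · have := (snap_near (σ x) (x + s x)).2
      omega
  · exact primrec₂_snap.to_comp.comp hσ (Primrec.nat_add.to_comp.comp .id hs)

theorem lowerString_one (c : Bool) : lowerString c 1 = true := by
  cases c <;> decide

theorem lowerString_mqired_upperString (c : Bool) : MQIred (lowerString c) (upperString c) :=
  mqired_upperString (s := fun x => 2 * stage x) (D := 2) (computable_lowerString c)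
    (Primrec.nat_double.comp primrec_stage).to_comp
    (fun _ _ h => Nat.mul_le_mul_left 2 (stage_mono h))
    (fun x => Nat.mul_le_mul_left 2 (stage_add_one_le x)) (lowerString_one c)
    fun _ h => lowerString_of_leftHalf (leftHalf_of_rightHalf_add h)

theorem lowerString_mqired_upperString_not (c : Bool) :
    MQIred (lowerString c) (upperString !c) :=
  mqired_upperString (s := fun _ => 0) (D := 0) (computable_lowerString c) (.const 0)
    monotone_const (fun _ => le_rfl) (lowerString_one c) fun _ h => lowerString_of_rightHalf h

theorem constNear_upperString (c : Bool) {j r : ℕ} (hr : r < j) :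
    ConstNear (upperString c) c (blockStart j + 3 * j) r :=
  fun _ _ h₁ h₂ => if_pos (rightHalf_of_mem_Ico (i := j) ⟨by omega, by omega⟩)

theorem leftHalf_or_rightHalf_of_constNear {c e : Bool} {y : ℕ} (hy : 2 ≤ y)
    (h : ConstNear (lowerString c) e y 1) : LeftHalf y ∨ RightHalf y := by
  by_contra hout
  obtain ⟨hl, hr⟩ := not_or.1 hout
  have hbit (b : Bool) : lowerString c (Nat.bit b y.div2) = b := by
    rw [lowerString, if_neg (mt leftHalf_bit_div2.1 hl), if_neg (mt rightHalf_bit_div2.1 hr),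
      Nat.bodd_bit]
  have hconst (b : Bool) : lowerString c (Nat.bit b y.div2) = e := by
    have := b.toNat_le
    rw [Nat.bit_val, Nat.div2_val]
    exact h _ (by omega) (by omega) (by omega)
  exact Bool.false_ne_true (((hbit false).symm.trans (hconst false)).trans
    ((hconst true).symm.trans (hbit true)))

theorem IsQI.exists_constNear_lowerString {C j x : ℕ} {c e : Bool} {ξ : ℕ → Bool} {f : ℕ → ℕ}
    (hf : IsQI C (lowerString c) ξ f) (hj : 5 * (C + 1) ^ 4 < j)
    (hxj : WithinFactor ((C + 1) ^ 2) x (blockStart j + 3 * j))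
    (h : ConstNear ξ e x (C * (C + 1) + C)) :
    ∃ y, 1 ≤ y ∧ f y ∈ Set.Icc x (x + C) ∧ ConstNear (lowerString c) e y (C + 1) ∧
      stage y = j ∧ (LeftHalf y ∨ RightHalf y) := by
  have hx : 1 ≤ x := by
    by_contra hlt
    obtain rfl : x = 0 := by omega
    have := hxj.2
    omega
  obtain ⟨y, hy, hfy, hconst, hyx⟩ := hf.exists_constNear hx h
  have hyj : WithinFactor ((C + 1) ^ 4) y (blockStart j + 3 * j) := by
    simpa only [← pow_add] using hyx.trans hxj
  have hy2 : 2 ≤ y := by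
    by_contra hlt
    obtain rfl : y = 1 := by omega
    have := hyj.2
    omega
  have hhalf := leftHalf_or_rightHalf_of_constNear hy2 (hconst.of_le (by omega) (by omega))
  exact ⟨y, hy, hfy, hconst, stage_eq_of_withinFactor hj hhalf hyj, hhalf⟩

theorem IsQI.lt_add_of_constNear_lowerString {C j x x' : ℕ} {c : Bool} {ξ : ℕ → Bool} {f : ℕ → ℕ}
    (hf : IsQI C (lowerString c) ξ f) (hj : 5 * (C + 1) ^ 4 < j)
    (hxj : WithinFactor ((C + 1) ^ 2) x (blockStart j + 3 * j))
    (hxj' : WithinFactor ((C + 1) ^ 2) x' (blockStart j + 3 * j))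
    (h : ConstNear ξ c x (C * (C + 1) + C)) (h' : ConstNear ξ (!c) x' (C * (C + 1) + C)) :
    x < x' + C := by
  obtain ⟨y, hy, hfy, hconst, hstage, hhalf⟩ := hf.exists_constNear_lowerString hj hxj h
  obtain ⟨y', hy', hfy', hconst', hstage', hhalf'⟩ :=
    hf.exists_constNear_lowerString hj hxj' h'
  have hcol : lowerString c y = c := hconst y hy (by omega) (by omega)
  have hcol' : lowerString c y' = !c := hconst' y' hy' (by omega) (by omega)
  have hleft : LeftHalf y := hhalf.resolve_right fun hr =>
    c.not_ne_self ((lowerString_of_rightHalf hr).symm.trans hcol)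
  have hright : RightHalf y' := hhalf'.resolve_left fun hl =>
    c.not_ne_self (hcol'.symm.trans (lowerString_of_leftHalf hl))
  have hlt : y < y' := by
    have hyj := hleft.2
    have hjy' := hright.1
    rw [hstage] at hyj
    rw [hstage'] at hjy'
    omega
  have hfar : y + C < y' := by
    by_contra hclose
    exact c.not_ne_self (hcol'.symm.trans (hconst y' hy' (by omega) (by omega)))
  calc x ≤ f y := hfy.1
    _ < f y' := hf.apply_lt_apply hy hfar
    _ ≤ x' + C := hfy'.2

theorem not_exists_qired_between_lowerString_upperString :
    ¬ ∃ ξ : ℕ → Bool, QIred (lowerString false) ξ ∧ QIred (lowerString true) ξ ∧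
      QIred ξ (upperString false) ∧ QIred ξ (upperString true) := by
  rintro ⟨ξ, ⟨C₁, f₁, hf₁⟩, ⟨C₂, f₂, hf₂⟩, ⟨C₃, g₁, hg₁⟩, ⟨C₄, g₂, hg₂⟩⟩
  obtain ⟨C, h₁, h₂, h₃, h₄⟩ : ∃ C, C₁ ≤ C ∧ C₂ ≤ C ∧ C₃ ≤ C ∧ C₄ ≤ C :=
    ⟨C₁ + C₂ + C₃ + C₄, by omega, by omega, by omega, by omega⟩
  obtain ⟨j, hj, hjr⟩ : ∃ j, 5 * (C + 1) ^ 4 < j ∧ C * (C * (C + 1) + C) + C < j :=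
    ⟨5 * (C + 1) ^ 4 + (C * (C * (C + 1) + C) + C) + 1, by omega, by omega⟩
  have hm : 1 ≤ blockStart j + 3 * j := by omega
  obtain ⟨x, -, -, hconst, hxj⟩ :=
    (hg₁.mono h₃).exists_constNear hm (constNear_upperString false hjr)
  obtain ⟨x', hx', -, hconst', hxj'⟩ :=
    (hg₂.mono h₄).exists_constNear hm (constNear_upperString true hjr)
  have hxx' : x < x' + C :=
    (hf₁.mono h₁).lt_add_of_constNear_lowerString hj hxj hxj' hconst hconst'
  have hx'x : x' < x + C :=
    (hf₂.mono h₂).lt_add_of_constNear_lowerString hj hxj' hxj hconst' hconst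
  exact Bool.false_ne_true ((hconst x' hx' (by omega) (by omega)).symm.trans
    (hconst' x' hx' (by omega) (by omega)))

theorem mqi_not_dense_general (Γ : Type*) [Primcodable Γ] [Nontrivial Γ] :
    ∃ α β γ δ : ℕ → Γ,
      Computable α ∧ Computable β ∧ Computable γ ∧ Computable δ ∧
      MQIred α γ ∧ MQIred α δ ∧ MQIred β γ ∧ MQIred β δ ∧
      ¬ ∃ ξ : ℕ → Γ, QIred α ξ ∧ QIred β ξ ∧ QIred ξ γ ∧ QIred ξ δ := by
  obtain ⟨a, b, hab⟩ := exists_pair_ne Γ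
  let ι : Bool → Γ := fun e => bif e then b else a
  have hι : Function.Injective ι := Bool.injective_iff.2 hab
  have hcomp {σ : ℕ → Bool} (hσ : Computable σ) : Computable (ι ∘ σ) :=
    (Primrec.dom_finite ι).to_comp.comp hσ
  refine ⟨ι ∘ lowerString false, ι ∘ lowerString true, ι ∘ upperString false, ι ∘ upperString true,
    hcomp (computable_lowerString _), hcomp (computable_lowerString _),
    hcomp (computable_upperString _), hcomp (computable_upperString _),
    (lowerString_mqired_upperString false).comp_left hι,
    (lowerString_mqired_upperString_not false).comp_left hι,
    (lowerString_mqired_upperString_not true).comp_left hι,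
    (lowerString_mqired_upperString true).comp_left hι, ?_⟩
  rintro ⟨ξ, hα, hβ, ⟨C, g, hg⟩, hδ⟩
  -- The reduction to `γ` shows that `ξ` has no letters besides `a` and `b`.
  have hξ : ∀ x, 1 ≤ x → ξ x = ι (upperString false (g x)) := fun _ hx => (hg.color_apply hx).symm
  have hιrfl {σ : ℕ → Bool} : ∀ x, 1 ≤ x → (ι ∘ σ) x = ι (σ x) := fun _ _ => rfl
  exact not_exists_qired_between_lowerString_upperString ⟨fun x => upperString false (g x),
    (QIred.iff_of_injective hι hιrfl hξ).1 hα, (QIred.iff_of_injective hι hιrfl hξ).1 hβ,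
    (QIred.iff_of_injective hι hξ hιrfl).1 ⟨C, g, hg⟩, (QIred.iff_of_injective hι hξ hιrfl).1 hδ⟩

/-- There are two pairs `(α, β)` and `(γ, δ)` of computable
strings over `{0,1}` with `α, β` both mqi-reducible to `γ` and to `δ`, but with no
string `ξ` satisfying `α ≤_mqi ξ`, `β ≤_mqi ξ`, `ξ ≤_mqi γ` and `ξ ≤_mqi δ`.
Hence the partial order of mqi-degrees is not dense with respect to pairs. -/
theorem mqi_not_dense :
    ∃ α β γ δ : ℕ → Fin 2,
      Computable α ∧ Computable β ∧ Computable γ ∧ Computable δ ∧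
      MQIred α γ ∧ MQIred α δ ∧ MQIred β γ ∧ MQIred β δ ∧
      ¬ ∃ ξ : ℕ → Fin 2, MQIred α ξ ∧ MQIred β ξ ∧ MQIred ξ γ ∧ MQIred ξ δ := by
  obtain ⟨α, β, γ, δ, hα, hβ, hγ, hδ, hαγ, hαδ, hβγ, hβδ, hnone⟩ := mqi_not_dense_general (Fin 2)
  exact ⟨α, β, γ, δ, hα, hβ, hγ, hδ, hαγ, hαδ, hβγ, hβδ, fun ⟨ξ, hαξ, hβξ, hξγ, hξδ⟩ =>
    hnone ⟨ξ, hαξ.qired, hβξ.qired, hξγ.qired, hξδ.qired⟩⟩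
end
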